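/- Every odd indefinite unimodular symmetric bilinear form over ℤ is isomorphic to a diagonal form p⟨1⟩ ⊕ q⟨−1⟩ for some non-negative integers p, q. -/

import Mathlib

namespace OddIndef

/-- `a` is nonzero and all its prime factors are `< k`. -/
def Sm (k : ℕ) (a : ℤ) : Prop := a ≠ 0 ∧ ∀ q : ℕ, q.Prime → (q : ℤ) ∣ a → q < k

lemma Sm.mul {k : ℕ} {a b : ℤ} (ha : Sm k a) (hb : Sm k b) : Sm k (a * b) := by
  refine ⟨mul_ne_zero ha.1 hb.1, fun q hq h => ?_⟩
  rcases (Nat.prime_iff_prime_int.mp hq).dvd_or_dvd h with h | h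
  · exact ha.2 q hq h
  · exact hb.2 q hq h

lemma Sm.left {k : ℕ} {a b : ℤ} (h : Sm k (a * b)) : Sm k a :=
  ⟨left_ne_zero_of_mul h.1, fun q hq hd => h.2 q hq (hd.mul_right b)⟩

lemma Sm.right {k : ℕ} {a b : ℤ} (h : Sm k (a * b)) : Sm k b :=
  ⟨right_ne_zero_of_mul h.1, fun q hq hd => h.2 q hq (hd.mul_left a)⟩

lemma Sm.neg {k : ℕ} {a : ℤ} (ha : Sm k a) : Sm k (-a) :=
  ⟨neg_ne_zero.mpr ha.1, fun q hq h => ha.2 q hq ((dvd_neg).mp h)⟩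

lemma Sm.of_lt {k : ℕ} {a : ℤ} (h0 : 0 < a) (h : a < k) : Sm k a := by
  refine ⟨h0.ne', fun q hq hd => ?_⟩
  have := Int.le_of_dvd h0 hd
  omega

lemma Sm.one {k : ℕ} : Sm k 1 := by
  refine ⟨one_ne_zero, fun q hq hd => ?_⟩
  have := Int.le_of_dvd one_pos hd
  have := hq.two_le
  omega

/-- Formal properties of the map `a ↦ ⟨a⟩` into a Witt group. -/
structure WittLike {W : Type} [AddCommGroup W] (g : ℤ → W) : Prop where
  zero : g 0 = 0
  neg : ∀ a, g (-a) = - g a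
  sq : ∀ a c, c ≠ 0 → g (a * c ^ 2) = g a
  add : ∀ a b, g a + g b = g (a + b) + g (a * b * (a + b))

variable {W : Type} [AddCommGroup W] {g : ℤ → W}

/-- The subgroup generated by the classes of `k`-smooth integers. -/
def SG (g : ℤ → W) (k : ℕ) : AddSubgroup W := AddSubgroup.closure {x | ∃ a, Sm k a ∧ x = g a}

lemma mem_SG {k : ℕ} {a : ℤ} (h : Sm k a) : g a ∈ SG g k :=
  AddSubgroup.subset_closure ⟨a, h, rfl⟩

lemma WittLike.two_sq (hg : WittLike g) (t x y : ℤ) (hm : x ^ 2 + y ^ 2 ≠ 0) :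
    g (t * (x ^ 2 + y ^ 2)) + g (t * (x ^ 2 + y ^ 2)) = g t + g t := by
  by_cases ht : t = 0
  · simp [ht]
  by_cases hx : x = 0
  · have hy : y ≠ 0 := by rintro rfl; simp [hx] at hm
    have : t * (x ^ 2 + y ^ 2) = t * y ^ 2 := by rw [hx]; ring
    rw [this, hg.sq _ _ hy]
  by_cases hy : y = 0
  · have : t * (x ^ 2 + y ^ 2) = t * x ^ 2 := by rw [hy]; ring
    rw [this, hg.sq _ _ hx]
  have h := hg.add (t * x ^ 2) (t * y ^ 2)
  rw [hg.sq _ _ hx, hg.sq _ _ hy] at h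
  rw [h, show t * x ^ 2 + t * y ^ 2 = t * (x ^ 2 + y ^ 2) by ring,
    show t * x ^ 2 * (t * y ^ 2) * (t * (x ^ 2 + y ^ 2)) =
      t * (x ^ 2 + y ^ 2) * (t * x * y) ^ 2 by ring,
    hg.sq _ _ (mul_ne_zero (mul_ne_zero ht hx) hy)]

lemma WittLike.four_sq (hg : WittLike g) (n : ℕ) (hn : n ≠ 0) :
    g n + g n + (g n + g n) = g 1 + g 1 + (g 1 + g 1) := by
  obtain ⟨a, b, c, d, h⟩ := Nat.sum_four_squares n
  have hZ : (n : ℤ) = ((a : ℤ) ^ 2 + (b : ℤ) ^ 2) + ((c : ℤ) ^ 2 + (d : ℤ) ^ 2) := by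
    rw [← h]; push_cast; ring
  have hnz : (n : ℤ) ≠ 0 := by exact_mod_cast hn
  by_cases h1 : (a : ℤ) ^ 2 + (b : ℤ) ^ 2 = 0
  · rw [h1, zero_add] at hZ
    have := hg.two_sq 1 c d (hZ ▸ hnz)
    rw [one_mul, ← hZ] at this
    rw [this]
  by_cases h2 : (c : ℤ) ^ 2 + (d : ℤ) ^ 2 = 0
  · rw [h2, add_zero] at hZ
    have := hg.two_sq 1 a b (hZ ▸ hnz)
    rw [one_mul, ← hZ] at this
    rw [this]
  have e1 := hg.two_sq 1 a b h1
  have e2 := hg.two_sq 1 c d h2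
  have e3 := hg.add ((a : ℤ) ^ 2 + (b : ℤ) ^ 2) ((c : ℤ) ^ 2 + (d : ℤ) ^ 2)
  rw [← hZ] at e3
  have h3 : ((a : ℤ) * c - b * d) ^ 2 + ((a : ℤ) * d + b * c) ^ 2
      = ((a : ℤ) ^ 2 + (b : ℤ) ^ 2) * ((c : ℤ) ^ 2 + (d : ℤ) ^ 2) := by ring
  have e4 := hg.two_sq n ((a : ℤ) * c - b * d) ((a : ℤ) * d + b * c)
    (by rw [h3]; exact mul_ne_zero h1 h2)
  rw [h3, mul_comm (n : ℤ)] at e4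
  rw [one_mul] at e1 e2
  generalize g ((a : ℤ) ^ 2 + (b : ℤ) ^ 2) = u at *
  generalize g ((c : ℤ) ^ 2 + (d : ℤ) ^ 2) = v at *
  generalize g (((a : ℤ) ^ 2 + (b : ℤ) ^ 2) * ((c : ℤ) ^ 2 + (d : ℤ) ^ 2) * n) = w at *
  calc g n + g n + (g n + g n) = g n + g n + (w + w) := by rw [e4]
    _ = (g n + w) + (g n + w) := by abel
    _ = (u + v) + (u + v) := by rw [e3]
    _ = (u + u) + (v + v) := by abel
    _ = _ := by rw [e1, e2]

lemma WittLike.red (hg : WittLike g) {p : ℕ} (hp : p.Prime) (b : ℕ) :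
    Sm p b → ∀ t, Sm p t → ∃ r : ℤ, 0 < r ∧ r < p ∧ (p : ℤ) ∣ b - r ∧
      g (p * t * b) - g (p * t * r) ∈ SG g p := by
  have hp0 : (p : ℤ) ≠ 0 := by exact_mod_cast hp.ne_zero
  induction b using induction_on_primes with
  | zero => intro h; exact absurd rfl h.1
  | one =>
    intro _ t ht
    exact ⟨1, one_pos, by exact_mod_cast hp.one_lt, by simp, by simp [zero_mem]⟩
  | prime_mul q b hq ih =>
    intro hqb t ht
    push_cast at hqb
    have hqs : Sm p q := hqb.left
    obtain ⟨r, hr0, hrp, hdiv, hmem⟩ := ih hqb.right (t * q) (ht.mul hqs)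
    have hrs : Sm p r := Sm.of_lt hr0 hrp
    have hqp : q < p := hqs.2 q hq dvd_rfl
    have hq0 : (0 : ℤ) < q := by exact_mod_cast hq.pos
    have hpp : (0 : ℤ) < p := by exact_mod_cast hp.pos
    set r' := (q * r) % (p : ℤ) with hr'
    set l := (q * r) / (p : ℤ) with hl
    have hdm : (p : ℤ) * l + r' = q * r := Int.mul_ediv_add_emod _ _
    have hr'0 : 0 ≤ r' := Int.emod_nonneg _ hp0
    have hr'p : r' < p := Int.emod_lt_of_pos _ hpp
    have hr'ne : r' ≠ 0 := by
      intro h0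
      have : (p : ℤ) ∣ q * r := Int.dvd_of_emod_eq_zero h0
      exact absurd ((hqs.mul hrs).2 p hp this) (lt_irrefl _)
    have hr'pos : 0 < r' := lt_of_le_of_ne hr'0 (Ne.symm hr'ne)
    refine ⟨r', hr'pos, hr'p, ?_, ?_⟩
    · obtain ⟨k, hk⟩ := hdiv
      refine ⟨q * k + l, ?_⟩
      push_cast
      linear_combination (q : ℤ) * hk - hdm
    · have hl0 : 0 ≤ l := Int.ediv_nonneg (by positivity) hpp.le
      have hlp : l < p := by
        apply Int.ediv_lt_of_lt_mul hpp
        have : (q : ℤ) < p := by exact_mod_cast hqp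
        nlinarith
      have key : g (p * (t * q) * r) - g (p * t * r') ∈ SG g p := by
        rcases hl0.eq_or_lt with h0 | h0
        · rw [← h0, mul_zero, zero_add] at hdm
          rw [hdm, show (p : ℤ) * (t * q) * r = p * t * (q * r) by ring, sub_self]
          exact zero_mem _
        · have hls : Sm p l := Sm.of_lt h0 hlp
          have e := hg.add (t * l * (p : ℤ) ^ 2) (p * t * r')
          rw [hg.sq _ _ hp0,
            show t * l * (p : ℤ) ^ 2 + p * t * r' = p * (t * q) * r by
              linear_combination (p : ℤ) * t * hdm,
            show t * l * (p : ℤ) ^ 2 * (p * t * r') * (p * (t * q) * r)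
              = (t * l * r' * q * r) * ((p : ℤ) ^ 2 * t) ^ 2 by ring,
            hg.sq _ _ (mul_ne_zero (pow_ne_zero 2 hp0) ht.1)] at e
          have : g (p * (t * q) * r) - g (p * t * r') = g (t * l) - g (t * l * r' * q * r) := by
            rw [sub_eq_sub_iff_add_eq_add, ← e, add_comm]
          rw [this]
          refine sub_mem (mem_SG (ht.mul hls)) (mem_SG ?_)
          exact (((ht.mul hls).mul (Sm.of_lt hr'pos hr'p)).mul hqs).mul hrs
      have := add_mem hmem key
      rw [sub_add_sub_cancel] at this
      push_cast
      rwa [show (p : ℤ) * t * (q * b) = p * (t * q) * b by ring]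

lemma WittLike.red1 (hg : WittLike g) {p : ℕ} (hp : p.Prime) (b : ℤ) (hb : Sm p b) :
    ∃ r : ℤ, 0 < r ∧ r < p ∧ (p : ℤ) ∣ b - r ∧ g (p * b) - g (p * r) ∈ SG g p := by
  have hp0 : (p : ℤ) ≠ 0 := by exact_mod_cast hp.ne_zero
  rcases lt_or_gt_of_ne hb.1 with h | h
  · obtain ⟨n, hn⟩ := Int.eq_ofNat_of_zero_le (neg_nonneg.mpr h.le)
    obtain ⟨r, h1, h2, h3, h4⟩ := hg.red hp n (hn ▸ hb.neg) 1 Sm.one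
    rw [mul_one, ← hn] at h4
    rw [← hn] at h3
    refine ⟨p - r, by linarith, by linarith, ?_, ?_⟩
    · have : b - (p - r) = -(-b - r) - p := by ring
      rw [this]
      exact dvd_sub (dvd_neg.mpr h3) dvd_rfl
    · have e := hg.add (1 * (p : ℤ) ^ 2) (-(p * r))
      rw [hg.sq _ _ hp0, show 1 * (p : ℤ) ^ 2 + -(p * r) = p * (p - r) by ring,
        show 1 * (p : ℤ) ^ 2 * -(p * r) * (p * (p - r)) = (-(r * (p - r))) * ((p : ℤ) ^ 2) ^ 2 by
          ring, hg.sq _ _ (pow_ne_zero 2 hp0), hg.neg] at e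
      rw [show (p : ℤ) * -b = -(p * b) by ring, hg.neg] at h4
      have m1 : g 1 ∈ SG g p := mem_SG Sm.one
      have m2 : g (-(r * (p - r))) ∈ SG g p :=
        mem_SG ((Sm.of_lt h1 h2).mul (Sm.of_lt (by linarith) (by linarith))).neg
      have : g (p * b) - g (p * (p - r)) =
          -(-g (p * b) - g (p * r)) - g 1 + g (-(r * (p - r))) := by
        have e' : g (p * (p - r)) = g 1 + -g (p * r) - g (-(r * (p - r))) := by
          rw [e]; abel
        rw [e']; abel
      rw [this]
      exact add_mem (sub_mem (neg_mem h4) m1) m2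
  · obtain ⟨n, hn⟩ := Int.eq_ofNat_of_zero_le h.le
    obtain ⟨r, h1, h2, h3, h4⟩ := hg.red hp n (hn ▸ hb) 1 Sm.one
    rw [mul_one, ← hn] at h4
    rw [← hn] at h3
    exact ⟨r, h1, h2, h3, h4⟩

lemma WittLike.red2 (hg : WittLike g) {p : ℕ} (hp : p.Prime) (b b' : ℤ) (hb : Sm p b)
    (hb' : Sm p b') (h : (p : ℤ) ∣ b - b') : g (p * b) - g (p * b') ∈ SG g p := by
  obtain ⟨r, h1, h2, h3, h4⟩ := hg.red1 hp b hb
  obtain ⟨s, k1, k2, k3, k4⟩ := hg.red1 hp b' hb'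
  have : r = s := by
    have hd : (p : ℤ) ∣ r - s := by
      have : r - s = (b - b') - (b - r) + (b' - s) := by ring
      rw [this]
      exact dvd_add (dvd_sub h h3) k3
    have := Int.eq_zero_of_abs_lt_dvd hd (by rw [abs_lt]; constructor <;> linarith)
    linarith
  subst this
  have := sub_mem h4 k4
  rwa [sub_sub_sub_cancel_right] at this

lemma WittLike.gen (hg : WittLike g) {p : ℕ} (hp : p.Prime) (n : ℕ) : ∀ a : ℤ, a.natAbs = n →
    Sm (p + 1) a → g a ∈ SG g p ∨ ∃ b, Sm p b ∧ g a = g (p * b) := by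
  have hp0 : (p : ℤ) ≠ 0 := by exact_mod_cast hp.ne_zero
  have aux : ∀ a : ℤ, Sm (p + 1) a → ¬ (p : ℤ) ∣ a → Sm p a := by
    intro a ha hd
    refine ⟨ha.1, fun q hq hqa => ?_⟩
    have := ha.2 q hq hqa
    rcases Nat.lt_succ_iff_lt_or_eq.mp this with h | h
    · exact h
    · exact absurd (h ▸ hqa) hd
  induction n using Nat.strong_induction_on with
  | _ n ih =>
    intro a han ha
    by_cases hd : (p : ℤ) ∣ a
    · obtain ⟨a', rfl⟩ := hd
      by_cases hd' : (p : ℤ) ∣ a'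
      · obtain ⟨a, rfl⟩ := hd'
        have e : (p : ℤ) * (p * a) = a * (p : ℤ) ^ 2 := by ring
        rw [e, hg.sq _ _ hp0]
        refine ih a.natAbs ?_ a rfl ha.right.right
        rw [← han, Int.natAbs_mul, Int.natAbs_mul, Int.natAbs_natCast]
        have h1 : 0 < a.natAbs := Int.natAbs_pos.mpr ha.right.right.1
        have := hp.two_le
        nlinarith [Nat.mul_le_mul this this, Nat.mul_le_mul_right a.natAbs (Nat.mul_le_mul this this)]
      · exact Or.inr ⟨a', aux a' ha.right hd', rfl⟩
    · exact Or.inl (mem_SG (aux a ha hd))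

/-- anisotropic modulo `p` -/
def Aniso {ι : Type} [Fintype ι] (p : ℕ) (e : ι → ℤ) : Prop :=
  ∀ x : ι → ℤ, (p : ℤ) ∣ ∑ i, e i * x i ^ 2 → ∀ i, (p : ℤ) ∣ x i

/-- existence of an anisotropic residue form -/
def NF (g : ℤ → W) (p : ℕ) (c : W) : Prop :=
  ∃ (n : ℕ) (e : Fin n → ℤ), Aniso p e ∧ (∀ i, e i ≠ 0) ∧ c - ∑ i, g (p * e i) ∈ SG g p

lemma NF0 {p : ℕ} {c : W} (h : c ∈ SG g p) : NF g p c :=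
  ⟨0, ![], fun _ _ i => i.elim0, fun i => i.elim0, by simpa using h⟩

lemma NF1 {p : ℕ} (hp : p.Prime) {c : W} (a : ℤ) (ha : ¬ (p : ℤ) ∣ a)
    (h : c - g (p * a) ∈ SG g p) : NF g p c := by
  refine ⟨1, ![a], fun x hx i => ?_, fun i => ?_, by simpa using h⟩
  · simp at hx
    rw [Subsingleton.elim i 0]
    have hP := Nat.prime_iff_prime_int.mp hp
    exact hP.dvd_of_dvd_pow ((hP.dvd_or_dvd hx).resolve_left ha)
  · rw [Subsingleton.elim i 0]
    rintro (h : a = 0)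
    simp [h] at ha

lemma NF2 {p : ℕ} (hp : p.Prime) {c : W} (a : ℤ) (ha0 : a ≠ 0)
    (ha : ¬ IsSquare (-(a : ZMod p)))
    (h : c - (g p + g (p * a)) ∈ SG g p) : NF g p c := by
  have := Fact.mk hp
  refine ⟨2, ![1, a], fun x hx i => ?_, fun i => ?_, by simpa [Fin.sum_univ_two] using h⟩
  · simp only [Fin.sum_univ_two, Matrix.cons_val_zero, Matrix.cons_val_one] at hx
    rw [← ZMod.intCast_zmod_eq_zero_iff_dvd] at hx
    push_cast at hx
    have h1 : ((x 1 : ℤ) : ZMod p) = 0 := by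
      by_contra h1
      apply ha
      refine ⟨(x 0 : ZMod p) / x 1, ?_⟩
      field_simp
      linear_combination -hx
    have h0 : ((x 0 : ℤ) : ZMod p) = 0 := by
      rw [h1] at hx
      simpa using hx
    rw [← ZMod.intCast_zmod_eq_zero_iff_dvd]
    fin_cases i
    · exact h0
    · exact h1
  · fin_cases i <;> simp [ha0]

/-- representative in `(0,p)` of a nonzero residue -/
lemma exists_rep {p : ℕ} [Fact p.Prime] (x : ZMod p) (hx : x ≠ 0) :
    ∃ r : ℤ, 0 < r ∧ r < p ∧ (r : ZMod p) = x := by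
  refine ⟨x.val, ?_, ?_, by simp⟩
  · exact_mod_cast Nat.pos_of_ne_zero (by simpa using hx)
  · exact_mod_cast ZMod.val_lt x

lemma WittLike.sqclass (hg : WittLike g) {p : ℕ} (hp : p.Prime) (b d : ℤ) (hb : Sm p b)
    (hd : Sm p d) (x : ZMod p) (h : (b : ZMod p) = d * x ^ 2) :
    g (p * b) - g (p * d) ∈ SG g p := by
  have := Fact.mk hp
  have hx : x ≠ 0 := by
    rintro rfl
    have : (b : ZMod p) = 0 := by simpa using h
    rw [ZMod.intCast_zmod_eq_zero_iff_dvd] at this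
    exact absurd (hb.2 p hp this) (lt_irrefl _)
  obtain ⟨r, h0, h1, rfl⟩ := exists_rep x hx
  have hr := Sm.of_lt h0 h1
  have := hg.red2 hp b (d * (r * r)) hb (hd.mul (hr.mul hr)) (by
    rw [← ZMod.intCast_zmod_eq_zero_iff_dvd]; push_cast; rw [h]; ring)
  rwa [show (p : ℤ) * (d * (r * r)) = (p * d) * r ^ 2 by ring, hg.sq _ _ h0.ne'] at this

lemma WittLike.step (hg : WittLike g) {p : ℕ} (hp : p.Prime) {c : W} (hc : c ∈ SG g (p + 1)) :
    NF g p c := by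
  have := Fact.mk hp
  have hp0 : (p : ℤ) ≠ 0 := by exact_mod_cast hp.ne_zero
  have hnd : ∀ b, Sm p b → (b : ZMod p) ≠ 0 := by
    intro b hb h
    rw [ZMod.intCast_zmod_eq_zero_iff_dvd] at h
    exact absurd (hb.2 p hp h) (lt_irrefl _)
  have h1nd : ¬ (p : ℤ) ∣ 1 := by
    intro h; exact absurd ((Sm.one (k := p)).2 p hp h) (lt_irrefl _)
  have g1 : g 1 ∈ SG g p := mem_SG Sm.one
  by_cases h2 : ∃ d : ℤ, Sm p d ∧ ¬ IsSquare (d : ZMod p) ∧ p % 4 ≠ 3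
  · -- p = 1 mod 4
    obtain ⟨d, hd, hdsq, hp4⟩ := h2
    have hm1 : IsSquare (-1 : ZMod p) := ZMod.exists_sq_eq_neg_one_iff.mpr hp4
    obtain ⟨x, y, hxy⟩ := Nat.Prime.sq_add_sq hp4
    have hxyZ : (x : ℤ) ^ 2 + (y : ℤ) ^ 2 = p := by exact_mod_cast hxy
    have t1 := hg.two_sq 1 x y (by rw [hxyZ]; exact hp0)
    have td := hg.two_sq d x y (by rw [hxyZ]; exact hp0)
    rw [hxyZ, one_mul] at t1
    rw [hxyZ, mul_comm d] at td
    have key : ∃ m n : ℤ, c - (m • g p + n • g (p * d)) ∈ SG g p := by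
      induction hc using AddSubgroup.closure_induction with
      | mem z hz =>
        obtain ⟨a, ha, rfl⟩ := hz
        rcases hg.gen hp _ a rfl ha with h | ⟨b, hb, h⟩
        · exact ⟨0, 0, by simpa using h⟩
        · rw [h]
          by_cases hs : IsSquare (b : ZMod p)
          · obtain ⟨z, hz⟩ := hs
            refine ⟨1, 0, ?_⟩
            have := hg.sqclass hp b 1 hb Sm.one z (by rw [hz]; push_cast; ring)
            simpa using this
          · refine ⟨0, 1, ?_⟩
            have : IsSquare ((b : ZMod p) * d) := by
              have hb0 := hnd b hb
              have hd0 := hnd d hd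
              rw [← quadraticChar_one_iff_isSquare (mul_ne_zero hb0 hd0), map_mul,
                quadraticChar_neg_one_iff_not_isSquare.mpr hs,
                quadraticChar_neg_one_iff_not_isSquare.mpr hdsq]
              norm_num
            obtain ⟨z, hz⟩ := this
            have := hg.sqclass hp b d hb hd (z / d) (by
              have hd0 := hnd d hd
              field_simp
              linear_combination hz)
            simpa using this
      | zero => exact ⟨0, 0, by simp [zero_mem]⟩
      | add a b _ _ ha hb =>
        obtain ⟨m, n, h⟩ := ha
        obtain ⟨m', n', h'⟩ := hb
        refine ⟨m + m', n + n', ?_⟩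
        have := add_mem h h'
        convert this using 1
        module
      | neg a _ ha =>
        obtain ⟨m, n, h⟩ := ha
        refine ⟨-m, -n, ?_⟩
        have := neg_mem h
        convert this using 1
        module
    obtain ⟨m, n, h⟩ := key
    have s1 : g p + g p ∈ SG g p := by rw [t1]; exact add_mem g1 g1
    have sd : g (p * d) + g (p * d) ∈ SG g p := by
      rw [td]; exact add_mem (mem_SG hd) (mem_SG hd)
    have hdnd : ¬ (p : ℤ) ∣ d := fun h => lt_irrefl _ (hd.2 p hp h)
    rcases Int.even_or_odd' m with ⟨k, rfl | rfl⟩ <;> rcases Int.even_or_odd' n with ⟨l, rfl | rfl⟩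
    · apply NF0
      have := add_mem h (add_mem (zsmul_mem s1 k) (zsmul_mem sd l))
      convert this using 1
      module
    · apply NF1 hp d hdnd
      have := add_mem h (add_mem (zsmul_mem s1 k) (zsmul_mem sd l))
      convert this using 1
      module
    · apply NF1 hp 1 h1nd
      have := add_mem h (add_mem (zsmul_mem s1 k) (zsmul_mem sd l))
      convert this using 1
      rw [mul_one]
      module
    · apply NF2 hp d hd.1
      · intro hs
        apply hdsq
        have := hs.mul hm1
        simpa using this
      have := add_mem h (add_mem (zsmul_mem s1 k) (zsmul_mem sd l))
      convert this using 1
      module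
  · push Not at h2
    have key : ∃ m : ℤ, c - m • g p ∈ SG g p := by
      induction hc using AddSubgroup.closure_induction with
      | mem z hz =>
        obtain ⟨a, ha, rfl⟩ := hz
        rcases hg.gen hp _ a rfl ha with h | ⟨b, hb, h⟩
        · exact ⟨0, by simpa using h⟩
        · rw [h]
          by_cases hs : IsSquare (b : ZMod p)
          · obtain ⟨z, hz⟩ := hs
            refine ⟨1, ?_⟩
            have := hg.sqclass hp b 1 hb Sm.one z (by rw [hz]; push_cast; ring)
            simpa using this
          · refine ⟨-1, ?_⟩
            have hp3 := h2 b hb hs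
            have hm1 : ¬ IsSquare (-1 : ZMod p) := by
              rw [ZMod.exists_sq_eq_neg_one_iff]; simpa using hp3
            have : IsSquare (-(b : ZMod p)) := by
              have hb0 := hnd b hb
              rw [neg_eq_neg_one_mul,
                ← quadraticChar_one_iff_isSquare (mul_ne_zero (by simp) hb0), map_mul,
                quadraticChar_neg_one_iff_not_isSquare.mpr hs,
                quadraticChar_neg_one_iff_not_isSquare.mpr hm1]
              norm_num
            obtain ⟨z, hz⟩ := this
            have := hg.sqclass hp (-b) 1 hb.neg Sm.one z (by push_cast; rw [hz]; ring)
            rw [mul_neg, hg.neg, mul_one] at this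
            have := neg_mem this
            convert this using 1
            module
      | zero => exact ⟨0, by simp [zero_mem]⟩
      | add a b _ _ ha hb =>
        obtain ⟨m, h⟩ := ha
        obtain ⟨m', h'⟩ := hb
        refine ⟨m + m', ?_⟩
        have := add_mem h h'
        convert this using 1
        module
      | neg a _ ha =>
        obtain ⟨m, h⟩ := ha
        refine ⟨-m, ?_⟩
        have := neg_mem h
        convert this using 1
        module
    obtain ⟨m, h⟩ := key
    by_cases hp3 : p % 4 = 3
    · have s4 : g p + g p + (g p + g p) ∈ SG g p := by
        rw [hg.four_sq p hp.ne_zero]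
        exact add_mem (add_mem g1 g1) (add_mem g1 g1)
      have h4 := zsmul_mem s4 (m / 4)
      have hm1 : ¬ IsSquare (-1 : ZMod p) := by
        rw [ZMod.exists_sq_eq_neg_one_iff]; simpa using hp3
      have hm : m = 4 * (m / 4) + m % 4 := (Int.mul_ediv_add_emod m 4).symm
      generalize m / 4 = k at *
      have hr : m % 4 = 0 ∨ m % 4 = 1 ∨ m % 4 = 2 ∨ m % 4 = 3 := by omega
      rcases hr with hr | hr | hr | hr <;> rw [hr] at hm <;> subst hm
      · apply NF0
        have := add_mem h h4
        convert this using 1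
        module
      · apply NF1 hp 1 h1nd
        have := add_mem h h4
        convert this using 1
        rw [mul_one]
        module
      · apply NF2 hp 1 one_ne_zero (by simpa using hm1)
        have := add_mem h h4
        convert this using 1
        rw [mul_one]
        module
      · apply NF1 hp (-1) (by simpa using h1nd)
        have := add_mem (add_mem h h4) s4
        convert this using 1
        rw [mul_neg, mul_one, hg.neg]
        module
    · obtain ⟨x, y, hxy⟩ := Nat.Prime.sq_add_sq hp3
      have hxyZ : (x : ℤ) ^ 2 + (y : ℤ) ^ 2 = p := by exact_mod_cast hxy
      have t1 := hg.two_sq 1 x y (by rw [hxyZ]; exact hp0)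
      rw [hxyZ, one_mul] at t1
      have s1 : g p + g p ∈ SG g p := by rw [t1]; exact add_mem g1 g1
      rcases Int.even_or_odd' m with ⟨k, rfl | rfl⟩
      · apply NF0
        have := add_mem h (zsmul_mem s1 k)
        convert this using 1
        module
      · apply NF1 hp 1 h1nd
        have := add_mem h (zsmul_mem s1 k)
        convert this using 1
        rw [mul_one]
        module

end OddIndef
namespace OddIndef
open Module

/-- there is a totally isotropic subspace of at least half the dimension -/
def Met {V : Type} [AddCommGroup V] [Module ℚ V] (Q : QuadraticForm ℚ V) : Prop :=
  ∃ X : Submodule ℚ V, (∀ x ∈ X, Q x = 0) ∧ finrank ℚ V ≤ 2 * finrank ℚ X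

lemma Met.equiv {V V' : Type} [AddCommGroup V] [Module ℚ V] [AddCommGroup V'] [Module ℚ V']
    {Q : QuadraticForm ℚ V} {Q' : QuadraticForm ℚ V'} (e : Q.Equivalent Q') (h : Met Q) :
    Met Q' := by
  obtain ⟨e⟩ := e
  obtain ⟨X, h1, h2⟩ := h
  refine ⟨X.map (e.toLinearEquiv : V →ₗ[ℚ] V'), ?_, ?_⟩
  · rintro _ ⟨x, hx, rfl⟩
    exact (e.map_app x).trans (h1 x hx)
  · rw [LinearEquiv.finrank_map_eq, ← e.toLinearEquiv.finrank_eq]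
    exact h2

lemma met_congr {V V' : Type} [AddCommGroup V] [Module ℚ V] [AddCommGroup V'] [Module ℚ V']
    {Q : QuadraticForm ℚ V} {Q' : QuadraticForm ℚ V'} (e : Q.Equivalent Q') :
    Met Q ↔ Met Q' := ⟨Met.equiv e, Met.equiv e.symm⟩

lemma equiv_prod {V V' U U' : Type} [AddCommGroup V] [Module ℚ V] [AddCommGroup V'] [Module ℚ V']
    [AddCommGroup U] [Module ℚ U] [AddCommGroup U'] [Module ℚ U']
    {Q : QuadraticForm ℚ V} {Q' : QuadraticForm ℚ V'}
    {R : QuadraticForm ℚ U} {R' : QuadraticForm ℚ U'}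
    (e : Q.Equivalent Q') (f : R.Equivalent R') :
    QuadraticMap.Equivalent (QuadraticMap.prod Q R) (QuadraticMap.prod Q' R') := by
  obtain ⟨e⟩ := e
  obtain ⟨f⟩ := f
  exact ⟨e.prod f⟩

lemma finrank_le_map {V V' : Type} [AddCommGroup V] [Module ℚ V] [AddCommGroup V'] [Module ℚ V']
    [FiniteDimensional ℚ V] (f : V →ₗ[ℚ] V') (Y : Submodule ℚ V) :
    finrank ℚ Y ≤ finrank ℚ (Y.map f) + finrank ℚ ↥(Y ⊓ LinearMap.ker f) := by
  have h := LinearMap.finrank_range_add_finrank_ker (f.domRestrict Y)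
  rw [LinearMap.range_domRestrict] at h
  rw [← h]
  refine Nat.add_le_add_left ?_ _
  have : (LinearMap.ker (f.domRestrict Y)).map Y.subtype ≤ Y ⊓ LinearMap.ker f := by
    rintro _ ⟨x, hx, rfl⟩
    exact ⟨x.2, hx⟩
  rw [← Submodule.finrank_map_subtype_eq Y]
  exact Submodule.finrank_mono this

lemma finrank_le_inf_ker {V : Type} [AddCommGroup V] [Module ℚ V]
    [FiniteDimensional ℚ V] (f : V →ₗ[ℚ] ℚ) (Y : Submodule ℚ V) :
    finrank ℚ Y ≤ finrank ℚ ↥(Y ⊓ LinearMap.ker f) + 1 := by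
  have h := finrank_le_map f Y
  have : finrank ℚ (Y.map f) ≤ 1 := by
    simpa using Submodule.finrank_le (Y.map f)
  omega

abbrev wss {ι : Type} [Fintype ι] (w : ι → ℚˣ) : QuadraticForm ℚ (ι → ℚ) :=
  QuadraticMap.weightedSumSquares ℚ w

lemma wss_apply {ι : Type} [Fintype ι] (w : ι → ℚˣ) (x : ι → ℚ) :
    wss w x = ∑ i, (w i : ℚ) * (x i * x i) := by
  simp [wss, QuadraticMap.weightedSumSquares_apply, Units.smul_def]

lemma arith1 {v x y m k : ℕ} (h2 : v + 2 ≤ 2 * x) (e1 : y ≤ m + k) (e3 : x ≤ y) (e4 : k ≤ 1) :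
    v ≤ 2 * m := by omega

lemma arith2 {v x y m : ℕ} (h2 : v + 2 ≤ 2 * x) (e1 : y ≤ m + 0) (e2 : x ≤ y + 1) :
    v ≤ 2 * m := by omega

lemma arith3 {v x y : ℕ} (h2 : v ≤ 2 * x) (e1 : x + 1 ≤ y) : v + 2 ≤ 2 * y := by omega

lemma met_hyp {V : Type} [AddCommGroup V] [Module ℚ V] [FiniteDimensional ℚ V]
    (Q : QuadraticForm ℚ V) (a : ℚˣ) :
    Met (QuadraticMap.prod Q (wss ![a, -a])) ↔ Met Q := by
  have hH : ∀ z : Fin 2 → ℚ, wss ![a, -a] z = a * (z 0 * z 0) - a * (z 1 * z 1) := by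
    intro z
    rw [wss_apply, Fin.sum_univ_two]
    simp [sub_eq_add_neg]
  have ha : (a : ℚ) ≠ 0 := a.ne_zero
  constructor
  · rintro ⟨X, h1, h2⟩
    rw [Module.finrank_prod, Module.finrank_fin_fun] at h2
    let φ : V × (Fin 2 → ℚ) →ₗ[ℚ] ℚ :=
      ((LinearMap.proj 0 : (Fin 2 → ℚ) →ₗ[ℚ] ℚ) - LinearMap.proj 1) ∘ₗ LinearMap.snd ℚ V (Fin 2 → ℚ)
    have hφ : ∀ y, φ y = y.2 0 - y.2 1 := fun y => rfl
    let F := LinearMap.fst ℚ V (Fin 2 → ℚ)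
    set Y := X ⊓ LinearMap.ker φ with hY
    refine ⟨Y.map F, ?_, ?_⟩
    · rintro _ ⟨y, ⟨hyX, hyk⟩, rfl⟩
      have := h1 y hyX
      have hk : y.2 0 = y.2 1 := by
        have : φ y = 0 := hyk
        rw [hφ] at this
        linarith
      rw [QuadraticMap.prod_apply, hH, hk] at this
      change Q y.1 = 0
      linarith
    · have e1 := finrank_le_map F Y
      have e2 := finrank_le_inf_ker φ X
      rw [← hY] at e2
      let u : V × (Fin 2 → ℚ) := (0, ![1, 1])
      have hker : Y ⊓ LinearMap.ker F ≤ Submodule.span ℚ {u} := by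
        rintro y ⟨⟨_, hyk⟩, hyF⟩
        have hk : φ y = 0 := hyk
        have hF : y.1 = 0 := hyF
        rw [hφ] at hk
        rw [Submodule.mem_span_singleton]
        refine ⟨y.2 0, ?_⟩
        ext i
        · simp [u, hF]
        · fin_cases i
          · simp [u]
          · simp [u]; linarith
      by_cases hu : u ∈ X
      · have hXY : X ≤ Y := by
          refine le_inf le_rfl fun x hx => ?_
          have q1 := h1 _ (X.add_mem hx hu)
          have q2 := h1 x hx
          rw [QuadraticMap.prod_apply, hH] at q1 q2
          simp [u] at q1
          change φ x = 0
          rw [hφ]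
          have : (a : ℚ) * (x.2 0 - x.2 1) = 0 := by linarith
          exact (mul_eq_zero.mp this).resolve_left ha
        have e3 := Submodule.finrank_mono hXY
        have e4 := Submodule.finrank_mono hker
        have e5 : finrank ℚ (Submodule.span ℚ {u}) ≤ 1 := by
          simpa using finrank_span_le_card (R := ℚ) ({u} : Set (V × (Fin 2 → ℚ)))
        exact arith1 h2 e1 e3 (e4.trans e5)
      · have hbot : Y ⊓ LinearMap.ker F = ⊥ := by
          rw [eq_bot_iff]
          intro y hy
          obtain ⟨c, rfl⟩ := Submodule.mem_span_singleton.mp (hker hy)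
          by_cases hc : c = 0
          · simp [hc]
          · exact absurd ((X.smul_mem_iff hc).mp hy.1.1) hu
        rw [hbot, finrank_bot] at e1
        exact arith2 h2 e1 e2
  · rintro ⟨X, h1, h2⟩
    refine ⟨X.prod (Submodule.span ℚ {![1, 1]}), ?_, ?_⟩
    · rintro ⟨x, z⟩ ⟨hx, hz⟩
      obtain ⟨c, rfl⟩ := Submodule.mem_span_singleton.mp hz
      rw [QuadraticMap.prod_apply, hH, h1 x hx]
      simp
    · have hS : finrank ℚ (Submodule.span ℚ {(![1, 1] : Fin 2 → ℚ)}) = 1 :=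
        finrank_span_singleton (by intro h; have := congrFun h 0; simp at this)
      set S := Submodule.span ℚ {(![1, 1] : Fin 2 → ℚ)}
      let f : (X × S) →ₗ[ℚ] X.prod S :=
        (X.subtype.prodMap S.subtype).codRestrict _ (fun z => ⟨z.1.2, z.2.2⟩)
      have hf : Function.Injective f := by
        intro y z h
        have h' := congrArg Subtype.val h
        have h1 := congrArg Prod.fst h'
        have h2 := congrArg Prod.snd h'
        exact Prod.ext (Subtype.ext h1) (Subtype.ext h2)
      have := LinearMap.finrank_le_finrank_of_injective hf
      rw [Module.finrank_prod] at this
      rw [Module.finrank_prod, Module.finrank_fin_fun]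
      rw [hS] at this
      exact arith3 h2 this

lemma exists_equiv_of_map_eq {ι ι' α : Type} [Fintype ι] [Fintype ι'] (w : ι → α)
    (w' : ι' → α) (h : (Finset.univ.val.map w) = (Finset.univ.val.map w')) :
    ∃ e : ι ≃ ι', ∀ i, w' (e i) = w i := by
  classical
  have hc : ∀ a, Nonempty ({i // w i = a} ≃ {j // w' j = a}) := by
    intro a
    rw [← Fintype.card_eq, Fintype.card_subtype, Fintype.card_subtype]
    have := congrArg (Multiset.count a) h
    rw [Multiset.count_map, Multiset.count_map] at this
    simpa [Finset.card, Finset.filter, eq_comm] using this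
  have f := fun a => (hc a).some
  let e := (Equiv.sigmaFiberEquiv w).symm.trans
    ((Equiv.sigmaCongrRight f).trans (Equiv.sigmaFiberEquiv w'))
  refine ⟨e, fun i => ?_⟩
  exact (f (w i) ⟨i, rfl⟩).2

lemma wss_reindex {ι ι' : Type} [Fintype ι] [Fintype ι'] (w : ι → ℚˣ)
    (w' : ι' → ℚˣ) (h : (Finset.univ.val.map w) = (Finset.univ.val.map w')) :
    (wss w).Equivalent (wss w') := by
  obtain ⟨e, he⟩ := exists_equiv_of_map_eq w w' h
  refine ⟨{ LinearEquiv.funCongrLeft ℚ ℚ e.symm with map_app' := fun x => ?_ }⟩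
  change wss w' (fun j => x (e.symm j)) = wss w x
  rw [wss_apply, wss_apply, ← e.sum_comp]
  simp [he]

lemma wss_sum {ι ι' : Type} [Fintype ι] [Fintype ι'] (w : ι → ℚˣ) (w' : ι' → ℚˣ) :
    (wss (Sum.elim w w')).Equivalent (QuadraticMap.prod (wss w) (wss w')) := by
  refine ⟨{ LinearEquiv.sumArrowLequivProdArrow ι ι' ℚ ℚ with map_app' := fun x => ?_ }⟩
  change QuadraticMap.prod (wss w) (wss w') (fun i => x (Sum.inl i), fun i => x (Sum.inr i)) = _
  rw [QuadraticMap.prod_apply, wss_apply, wss_apply, wss_apply]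
  simp

/-- metabolic multisets -/
def MetS (m : Multiset ℚˣ) : Prop :=
  ∃ (n : ℕ) (w : Fin n → ℚˣ), Finset.univ.val.map w = m ∧ Met (wss w)

lemma exists_fn (m : Multiset ℚˣ) : ∃ (n : ℕ) (w : Fin n → ℚˣ), Finset.univ.val.map w = m := by
  induction m using Quotient.inductionOn with
  | _ l =>
    refine ⟨l.length, l.get, ?_⟩
    simp

lemma metS_iff {ι : Type} [Fintype ι] (w : ι → ℚˣ) :
    MetS (Finset.univ.val.map w) ↔ Met (wss w) := by
  constructor
  · rintro ⟨n, w', h, h'⟩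
    exact h'.equiv (wss_reindex _ _ h)
  · intro h
    obtain ⟨n, w', h'⟩ := exists_fn (Finset.univ.val.map w)
    exact ⟨n, w', h', h.equiv (wss_reindex _ _ h'.symm)⟩

lemma map_univ_sum {ι ι' : Type} [Fintype ι] [Fintype ι'] (w : ι → ℚˣ) (w' : ι' → ℚˣ) :
    Finset.univ.val.map (Sum.elim w w') = Finset.univ.val.map w + Finset.univ.val.map w' := by
  rw [← Finset.univ_disjSum_univ]
  rw [Finset.val_disjSum, Multiset.disjSum, Multiset.map_add, Multiset.map_map, Multiset.map_map]
  rfl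

lemma metS_add {ι ι' : Type} [Fintype ι] [Fintype ι'] (w : ι → ℚˣ) (w' : ι' → ℚˣ) :
    MetS (Finset.univ.val.map w + Finset.univ.val.map w') ↔
      Met (QuadraticMap.prod (wss w) (wss w')) := by
  rw [← map_univ_sum, metS_iff, met_congr (wss_sum w w')]

/-- Witt equivalence -/
def wittCon : AddCon (Multiset ℚˣ) where
  r m m' := ∀ k, MetS (k + m) ↔ MetS (k + m')
  iseqv := ⟨fun _ _ => Iff.rfl, fun h k => (h k).symm, fun h h' k => (h k).trans (h' k)⟩
  add' := by
    intro a b c d h h' k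
    rw [← add_assoc, h' (k + a), add_right_comm, h (k + d), add_right_comm, add_assoc]

lemma witt_of_equiv {ι ι' : Type} [Fintype ι] [Fintype ι'] (w : ι → ℚˣ) (w' : ι' → ℚˣ)
    (h : (wss w).Equivalent (wss w')) :
    wittCon (Finset.univ.val.map w) (Finset.univ.val.map w') := by
  intro k
  obtain ⟨n, v, rfl⟩ := exists_fn k
  rw [metS_add, metS_add]
  exact met_congr (equiv_prod (QuadraticMap.Equivalent.refl _) h)

lemma witt_hyp (a : ℚˣ) : wittCon ({a} + {-a}) 0 := by
  intro k
  obtain ⟨n, v, rfl⟩ := exists_fn k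
  have : ({a} + {-a} : Multiset ℚˣ) = Finset.univ.val.map ![a, -a] := by
    simp
    rfl
  rw [this, metS_add, met_hyp, add_zero, metS_iff]

lemma witt_sq (a c : ℚˣ) : wittCon {a * c ^ 2} {a} := by
  have h : ∀ a : ℚˣ, ({a} : Multiset ℚˣ) = Finset.univ.val.map ![a] := by
    intro a; simp
  rw [h, h]
  apply witt_of_equiv
  refine ⟨{ LinearEquiv.smulOfUnit c with map_app' := fun x => ?_ }⟩
  change wss ![a] (c • x) = _
  rw [wss_apply, wss_apply]
  simp [Units.smul_def]
  ring

lemma witt_add (a b c : ℚˣ) (h : (c : ℚ) = a + b) :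
    wittCon ({a} + {b}) ({c} + {a * b * c}) := by
  have e : ∀ a b : ℚˣ, ({a} + {b} : Multiset ℚˣ) = Finset.univ.val.map ![a, b] := by
    intro a b; simp; rfl
  rw [e, e]
  apply witt_of_equiv
  have hc : (a : ℚ) + b ≠ 0 := h ▸ c.ne_zero
  -- x = s - b t, y = s + a t
  refine QuadraticMap.Equivalent.symm ⟨{ toFun := fun z => ![z 0 - b * z 1, z 0 + a * z 1]
                                         map_add' := ?_
                                         map_smul' := ?_
                                         invFun := fun z => ![(a * z 0 + b * z 1) / (a + b),
                                            (z 1 - z 0) / (a + b)]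
                                         left_inv := ?_
                                         right_inv := ?_
                                         map_app' := ?_ }⟩
  · intro x y
    ext i
    fin_cases i <;> simp <;> ring
  · intro x y
    ext i
    fin_cases i <;> simp <;> ring
  · intro x
    ext i
    fin_cases i <;> simp <;> field_simp <;> ring
  · intro x
    ext i
    fin_cases i <;> simp <;> field_simp <;> ring
  · intro x
    simp only [wss_apply, Fin.sum_univ_two]
    simp [h]
    ring

/-- The Witt group of `ℚ` -/
abbrev Wq : Type := AddUnits wittCon.Quotient

/-- class of a one-dimensional form -/
def cls (a : ℚˣ) : Wq where
  val := (({a} : Multiset ℚˣ) : wittCon.Quotient)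
  neg := (({-a} : Multiset ℚˣ) : wittCon.Quotient)
  val_neg := by
    rw [← AddCon.coe_add, ← AddCon.coe_zero]
    exact (AddCon.eq _).mpr (witt_hyp a)
  neg_val := by
    rw [← AddCon.coe_add, ← AddCon.coe_zero, add_comm]
    exact (AddCon.eq _).mpr (witt_hyp a)

lemma cls_neg (a : ℚˣ) : cls (-a) = - cls a := by
  ext
  rfl

/-- class of an integer -/
noncomputable def gq (a : ℤ) : Wq := if h : (a : ℚ) ≠ 0 then cls (Units.mk0 (a : ℚ) h) else 0

lemma gq_zero : gq 0 = 0 := by simp [gq]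

lemma gq_of_ne {a : ℤ} (h : (a : ℚ) ≠ 0) : gq a = cls (Units.mk0 (a : ℚ) h) := by
  simp only [gq, dif_pos h]

lemma gq_neg (a : ℤ) : gq (-a) = - gq a := by
  by_cases h : (a : ℚ) = 0
  · have : a = 0 := by exact_mod_cast h
    simp [this, gq_zero]
  · rw [gq_of_ne h, gq_of_ne (a := -a) (by push_cast; exact neg_ne_zero.mpr h), ← cls_neg]
    congr 1
    ext
    simp

lemma wittLike_gq : WittLike gq where
  zero := gq_zero
  neg := gq_neg
  sq a c hc := by
    by_cases h : (a : ℚ) = 0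
    · have : a = 0 := by exact_mod_cast h
      simp [this]
    · have hc' : (c : ℚ) ≠ 0 := by exact_mod_cast hc
      have h2 : ((a * c ^ 2 : ℤ) : ℚ) ≠ 0 := by
        push_cast; exact mul_ne_zero h (pow_ne_zero 2 hc')
      rw [gq_of_ne h, gq_of_ne h2]
      ext
      have := witt_sq (Units.mk0 (a : ℚ) h) (Units.mk0 (c : ℚ) hc')
      have e : Units.mk0 ((a * c ^ 2 : ℤ) : ℚ) h2 =
          Units.mk0 (a : ℚ) h * (Units.mk0 (c : ℚ) hc') ^ 2 := by
        ext; simp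
      rw [e]
      exact (AddCon.eq _).mpr this
  add a b := by
    by_cases ha : (a : ℚ) = 0
    · have : a = 0 := by exact_mod_cast ha
      simp [this, gq_zero]
    by_cases hb : (b : ℚ) = 0
    · have : b = 0 := by exact_mod_cast hb
      simp [this, gq_zero]
    by_cases hab : ((a + b : ℤ) : ℚ) = 0
    · have hab' : a + b = 0 := by exact_mod_cast hab
      rw [hab', mul_zero, gq_zero, eq_neg_of_add_eq_zero_right hab', gq_neg]
      simp
    have h3 : ((a * b * (a + b) : ℤ) : ℚ) ≠ 0 := by
      push_cast at hab ⊢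
      exact mul_ne_zero (mul_ne_zero ha hb) hab
    rw [gq_of_ne ha, gq_of_ne hb, gq_of_ne hab, gq_of_ne h3]
    ext
    have := witt_add (Units.mk0 (a : ℚ) ha) (Units.mk0 (b : ℚ) hb) (Units.mk0 _ hab)
      (by simp)
    have e : Units.mk0 ((a * b * (a + b) : ℤ) : ℚ) h3 =
        Units.mk0 (a : ℚ) ha * Units.mk0 (b : ℚ) hb * Units.mk0 _ hab := by
      ext; simp
    rw [e]
    exact (AddCon.eq _).mpr this

lemma cls_eq_gq (a : ℚˣ) : ∃ z : ℤ, z ≠ 0 ∧ cls a = gq z := by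
  have hd : ((a : ℚ).den : ℚ) ≠ 0 := by exact_mod_cast (a : ℚ).den_nz
  have hn : ((a : ℚ).num : ℚ) ≠ 0 := by
    have := Rat.num_ne_zero.mpr a.ne_zero
    exact_mod_cast this
  have hz : (((a : ℚ).num * (a : ℚ).den : ℤ) : ℚ) ≠ 0 := by
    push_cast; exact mul_ne_zero hn hd
  refine ⟨(a : ℚ).num * (a : ℚ).den, by exact_mod_cast hz, ?_⟩
  rw [gq_of_ne hz]
  ext
  have := witt_sq a (Units.mk0 _ hd)
  have e : Units.mk0 _ hz = a * (Units.mk0 _ hd) ^ 2 := by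
    ext
    push_cast
    simp only [Units.val_mk0]
    have := Rat.mul_den_eq_num (a : ℚ)
    rw [← this]
    ring
  rw [e]
  exact ((AddCon.eq _).mpr this).symm

/-- class of a diagonal form -/
noncomputable def clsw {ι : Type} [Fintype ι] (w : ι → ℚˣ) : Wq := ∑ i, cls (w i)

lemma clsw_val {ι : Type} [Fintype ι] (w : ι → ℚˣ) :
    (clsw w).val = ((Finset.univ.val.map w : Multiset ℚˣ) : wittCon.Quotient) := by
  have h : ∀ s : Finset ι, ((∑ i ∈ s, cls (w i) : Wq)).val =
      ((s.val.map w : Multiset ℚˣ) : wittCon.Quotient) := by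
    classical
    intro s
    induction s using Finset.induction_on with
    | empty => rfl
    | insert a s ha ih =>
      rw [Finset.sum_insert ha, AddUnits.val_add, ih, Finset.insert_val_of_notMem ha,
        Multiset.map_cons, ← Multiset.singleton_add, AddCon.coe_add]
      rfl
  exact h _

lemma metS_zero : MetS 0 := by
  refine ⟨0, ![], by simp, ⊥, ?_, by simp⟩
  intro x hx
  simp [(Submodule.mem_bot ℚ).mp hx]

lemma met_of_clsw {ι κ : Type} [Fintype ι] [Fintype κ] (w : ι → ℚˣ) (v : κ → ℚˣ)
    (h : clsw w + clsw v = 0) :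
    Met (QuadraticMap.prod (wss w) (wss v)) := by
  rw [← metS_add]
  have h' := congrArg AddUnits.val h
  rw [AddUnits.val_add, clsw_val, clsw_val, ← AddCon.coe_add, AddUnits.val_zero,
    ← AddCon.coe_zero] at h'
  have := (AddCon.eq _).mp h' 0
  rw [zero_add, zero_add] at this
  exact this.mpr metS_zero

end OddIndef
namespace OddIndef
open Module Matrix

/-- integral vectors inside rational vectors -/
def castHom (κ ε : Type) : ((κ → ℤ) × (ε → ℤ)) →ₗ[ℤ] ((κ → ℚ) × (ε → ℚ)) :=
  AddMonoidHom.toIntLinearMap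
    { toFun := fun n => (fun i => (n.1 i : ℚ), fun i => (n.2 i : ℚ))
      map_zero' := by ext <;> simp
      map_add' := by intro x y; ext <;> simp }

lemma exists_clear {κ : Type} [Finite κ] (x : κ → ℚ) :
    ∃ (D : ℤ) (m : κ → ℤ), D ≠ 0 ∧ ∀ i, (m i : ℚ) = D * x i := by
  classical
  have := Fintype.ofFinite κ
  obtain ⟨b, hb⟩ := IsLocalization.exist_integer_multiples_of_finite (nonZeroDivisors ℤ) x
  choose m hm using hb
  refine ⟨b, m, nonZeroDivisors.ne_zero b.2, fun i => ?_⟩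
  have := hm i
  simpa [Submonoid.smul_def, zsmul_eq_mul] using this

lemma exists_clear2 {κ ε : Type} [Finite κ] [Finite ε] (x : (κ → ℚ) × (ε → ℚ)) :
    ∃ (D : ℤ) (m : (κ → ℤ) × (ε → ℤ)), D ≠ 0 ∧ castHom κ ε m = (D : ℚ) • x := by
  obtain ⟨D, m, hD, h⟩ := exists_clear (Sum.elim x.1 x.2)
  refine ⟨D, (fun i => m (Sum.inl i), fun i => m (Sum.inr i)), hD, ?_⟩
  ext i
  · exact h (Sum.inl i)
  · exact h (Sum.inr i)

lemma finrank_int_points {κ ε : Type} [Fintype κ] [Fintype ε]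
    (X : Submodule ℚ ((κ → ℚ) × (ε → ℚ))) :
    finrank ℚ X ≤ finrank ℤ ((X.restrictScalars ℤ).comap (castHom κ ε)) := by
  set N := (X.restrictScalars ℤ).comap (castHom κ ε)
  let b := Module.finBasis ℚ X
  choose D m hD hm using fun i => exists_clear2 (b i : (κ → ℚ) × (ε → ℚ))
  have hmN : ∀ i, m i ∈ N := by
    intro i
    change castHom κ ε (m i) ∈ X
    rw [hm]
    exact X.smul_mem _ (b i).2
  have hli : LinearIndependent ℚ (fun i => (b i : (κ → ℚ) × (ε → ℚ))) :=
    b.linearIndependent.map' X.subtype (Submodule.ker_subtype X)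
  have hli2 := hli.units_smul (fun i => Units.mk0 (D i : ℚ) (by exact_mod_cast hD i))
  have hli3 := hli2.restrict_scalars (R := ℤ) (by
    intro x y h
    simpa using h)
  have hli4 : LinearIndependent ℤ (fun i => (⟨m i, hmN i⟩ : N)) := by
    apply LinearIndependent.of_comp ((castHom κ ε).comp N.subtype)
    convert hli3 using 1
    ext1 i
    simp only [Function.comp, LinearMap.comp_apply, Submodule.subtype_apply, hm]
    rfl
  simpa using hli4.fintype_card_le_finrank

lemma plem {κ ε : Type} [Fintype κ] [DecidableEq κ] [Fintype ε] {p : ℕ} (hp : p.Prime)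
    (A : Matrix κ κ ℤ) (hA : Aᵀ = A) (hdet : ¬ (p : ℤ) ∣ A.det) (e : ε → ℤ) (he : Aniso p e)
    (X : Submodule ℚ ((κ → ℚ) × (ε → ℚ)))
    (hX : ∀ x ∈ X, x.1 ⬝ᵥ (A.map (Int.cast : ℤ → ℚ)) *ᵥ x.1 + p * ∑ i, (e i : ℚ) * x.2 i ^ 2 = 0)
    (hdim : Fintype.card κ + Fintype.card ε ≤ 2 * finrank ℚ X) : Fintype.card ε = 0 := by
  have := Fact.mk hp
  have hp0 : (p : ℤ) ≠ 0 := by exact_mod_cast hp.ne_zero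
  have hr := finrank_int_points X
  set N := (X.restrictScalars ℤ).comap (castHom κ ε) with hN
  have q0 : ∀ n ∈ N, n.1 ⬝ᵥ A *ᵥ n.1 + p * ∑ i, e i * n.2 i ^ 2 = 0 := by
    intro n hn
    have := hX _ hn
    have h2 : ((n.1 ⬝ᵥ A *ᵥ n.1 + p * ∑ i, e i * n.2 i ^ 2 : ℤ) : ℚ) = 0 := by
      rw [← this]
      simp [castHom, dotProduct, mulVec]
    exact_mod_cast h2
  have hdiv : ∀ n : (κ → ℤ) × (ε → ℤ), (p : ℤ) • n ∈ N → n ∈ N := by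
    intro n hn
    have h1 : castHom κ ε ((p : ℤ) • n) ∈ X := hn
    rw [map_smul] at h1
    have h2 : (p : ℚ) • castHom κ ε n ∈ X := by
      rwa [← Int.cast_smul_eq_zsmul ℚ, Int.cast_natCast] at h1
    exact (X.smul_mem_iff (by exact_mod_cast hp.ne_zero)).mp h2
  have symm : ∀ x y : κ → ℤ, x ⬝ᵥ A *ᵥ y = y ⬝ᵥ A *ᵥ x := by
    intro x y
    rw [dotProduct_mulVec, ← mulVec_transpose, hA, dotProduct_comm]
  have b0 : ∀ m ∈ N, ∀ n ∈ N, (p : ℤ) ∣ m.1 ⬝ᵥ A *ᵥ n.1 := by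
    intro m hm n hn
    have h1 := q0 _ (N.add_mem hm hn)
    have h2 := q0 m hm
    have h3 := q0 n hn
    simp only [Prod.fst_add, Prod.snd_add, mulVec_add, add_dotProduct, dotProduct_add,
      Pi.add_apply] at h1
    have h4 : ∑ i, e i * (m.2 i + n.2 i) ^ 2 = ∑ i, e i * m.2 i ^ 2 + ∑ i, e i * n.2 i ^ 2
        + 2 * ∑ i, e i * (m.2 i * n.2 i) := by
      rw [Finset.mul_sum, ← Finset.sum_add_distrib, ← Finset.sum_add_distrib]
      exact Finset.sum_congr rfl fun i _ => by ring
    rw [h4, symm n.1 m.1] at h1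
    refine ⟨-∑ i, e i * (m.2 i * n.2 i), ?_⟩
    linarith
  let b := Module.finBasis ℤ N
  let P : Matrix (Fin (finrank ℤ N)) κ (ZMod p) := fun i j => ((b i).1.1 j : ZMod p)
  have hP : P.rank = finrank ℤ N := by
    have hli : LinearIndependent (ZMod p) P.row := by
      rw [Fintype.linearIndependent_iff]
      intro c hc
      -- lift the coefficients
      let c' : Fin (finrank ℤ N) → ℤ := fun i => (c i).val
      have hcc : ∀ i, ((c' i : ℤ) : ZMod p) = c i := by intro i; simp [c']
      set n : N := ∑ i, c' i • b i with hn
      have hn1 : ∀ j, (p : ℤ) ∣ n.1.1 j := by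
        intro j
        rw [← ZMod.intCast_zmod_eq_zero_iff_dvd]
        have := congrFun hc j
        simp only [Finset.sum_apply, Pi.smul_apply, Pi.zero_apply, smul_eq_mul] at this
        rw [← this, hn]
        simp [Prod.fst_sum, P, Matrix.row, hcc]
      choose k hk using hn1
      have hk' : n.1.1 = (p : ℤ) • k := by ext j; simp [hk]
      have hq := q0 n.1 n.2
      rw [hk', mulVec_smul, smul_dotProduct, dotProduct_smul, smul_eq_mul, smul_eq_mul,
        ← mul_add] at hq
      have hq2 := (mul_eq_zero.mp hq).resolve_left hp0
      have hn2 : ∀ i, (p : ℤ) ∣ n.1.2 i := he _ ⟨-(k ⬝ᵥ A *ᵥ k), by linarith⟩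
      choose l hl using hn2
      have hnp : n.1 = (p : ℤ) • ((k, l) : (κ → ℤ) × (ε → ℤ)) := by
        ext j
        · simp [hk]
        · simp [hl]
      have hkl : ((k, l) : (κ → ℤ) × (ε → ℤ)) ∈ N := hdiv _ (hnp ▸ n.2)
      have hnn : n = (p : ℤ) • (⟨(k, l), hkl⟩ : N) := Subtype.ext hnp
      intro i
      have h1 : b.repr n i = c' i := by
        rw [hn, b.repr_sum_self]
      rw [hnn, map_smul] at h1
      rw [← hcc, ← h1]
      simp
    simpa using hli.rank_matrix
  let A' : Matrix κ κ (ZMod p) := A.map (Int.cast : ℤ → ZMod p)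
  have hA' : IsUnit A'.det := by
    have : A'.det = ((A.det : ℤ) : ZMod p) := (Int.cast_det A).symm
    rw [this, isUnit_iff_ne_zero, Ne, ZMod.intCast_zmod_eq_zero_iff_dvd]
    exact hdet
  have hz : P * (A' * Pᵀ) = 0 := by
    ext i j
    have h := b0 (b i).1 (b i).2 (b j).1 (b j).2
    rw [← ZMod.intCast_zmod_eq_zero_iff_dvd] at h
    rw [Matrix.zero_apply, ← h]
    simp only [Matrix.mul_apply, Matrix.transpose_apply]
    simp [dotProduct, mulVec, P, A']
  have h1 := rank_add_rank_le_card_of_mul_eq_zero hz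
  rw [rank_mul_eq_right_of_isUnit_det _ _ hA', rank_transpose, hP] at h1
  omega

lemma finrank_prod_sub {V V' : Type} [AddCommGroup V] [Module ℚ V] [AddCommGroup V'] [Module ℚ V']
    [FiniteDimensional ℚ V] [FiniteDimensional ℚ V'] (X : Submodule ℚ V) (S : Submodule ℚ V') :
    finrank ℚ X + finrank ℚ S ≤ finrank ℚ (X.prod S) := by
  let f : (X × S) →ₗ[ℚ] X.prod S :=
    (X.subtype.prodMap S.subtype).codRestrict _ (fun z => ⟨z.1.2, z.2.2⟩)
  have hf : Function.Injective f := by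
    intro y z h
    have h' := congrArg Subtype.val h
    have h1 := congrArg Prod.fst h'
    have h2 := congrArg Prod.snd h'
    exact Prod.ext (Subtype.ext h1) (Subtype.ext h2)
  have := LinearMap.finrank_le_finrank_of_injective hf
  rwa [Module.finrank_prod] at this

lemma SG_repr {W : Type} [AddCommGroup W] {g : ℤ → W} (hg : WittLike g) {k : ℕ} {c : W}
    (hc : c ∈ SG g k) : ∃ (m : ℕ) (d : Fin m → ℤ), (∀ j, Sm k (d j)) ∧ c = ∑ j, g (d j) := by
  induction hc using AddSubgroup.closure_induction with
  | mem z hz =>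
    obtain ⟨a, ha, rfl⟩ := hz
    exact ⟨1, ![a], fun j => by rw [Subsingleton.elim j 0]; exact ha, by simp⟩
  | zero => exact ⟨0, ![], fun j => j.elim0, by simp⟩
  | add a b _ _ ha hb =>
    obtain ⟨m, d, h, rfl⟩ := ha
    obtain ⟨m', d', h', rfl⟩ := hb
    refine ⟨m + m', Fin.append d d', fun j => ?_, ?_⟩
    · refine Fin.addCases (fun i => ?_) (fun i => ?_) j
      · rw [Fin.append_left]; exact h i
      · rw [Fin.append_right]; exact h' i
    · rw [Fin.sum_univ_add]
      simp
  | neg a _ ha =>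
    obtain ⟨m, d, h, rfl⟩ := ha
    exact ⟨m, fun j => -d j, fun j => (h j).neg, by simp [hg.neg]⟩

lemma SG_mono {W : Type} [AddCommGroup W] {g : ℤ → W} {k l : ℕ} (h : k ≤ l) :
    SG g k ≤ SG g l := by
  apply AddSubgroup.closure_mono
  rintro _ ⟨a, ha, rfl⟩
  exact ⟨a, ⟨ha.1, fun q hq hd => (ha.2 q hq hd).trans_le h⟩, rfl⟩

/-- rational quadratic form of an integral matrix -/
noncomputable def QA {n : ℕ} (A : Matrix (Fin n) (Fin n) ℤ) : QuadraticForm ℚ (Fin n → ℚ) :=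
  (A.map (Int.cast : ℤ → ℚ)).toQuadraticForm'

lemma QA_apply {n : ℕ} (A : Matrix (Fin n) (Fin n) ℤ) (x : Fin n → ℚ) :
    QA A x = x ⬝ᵥ (A.map (Int.cast : ℤ → ℚ)) *ᵥ x := by
  simp [QA, Matrix.toQuadraticForm', toLinearMap₂'_apply']

lemma QA_diag {n : ℕ} (A : Matrix (Fin n) (Fin n) ℤ) (hA : Aᵀ = A) (hdet : IsUnit A.det) :
    ∃ (m : ℕ) (w : Fin m → ℚˣ), (QA A).Equivalent (wss w) := by
  set A' := A.map (Int.cast : ℤ → ℚ) with hA'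
  have hsymm : A'ᵀ = A' := by
    rw [hA', ← Matrix.transpose_map, hA]
  have symm : ∀ x y : Fin n → ℚ, x ⬝ᵥ A' *ᵥ y = y ⬝ᵥ A' *ᵥ x := by
    intro x y
    rw [dotProduct_mulVec, ← mulVec_transpose, hsymm, dotProduct_comm]
  have hd : A'.det ≠ 0 := by
    have : A'.det = ((A.det : ℤ) : ℚ) := (Int.cast_det A).symm
    rw [this]
    exact_mod_cast hdet.ne_zero
  have hs : LinearMap.SeparatingLeft (QuadraticMap.associated (R := ℚ) (QA A)) := by
    intro x hx
    have hx' : ∀ y, x ⬝ᵥ A' *ᵥ y = 0 := by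
      intro y
      have := hx y
      rw [QuadraticMap.associated_apply, QA_apply, QA_apply, QA_apply, ← hA'] at this
      simp only [mulVec_add, add_dotProduct, dotProduct_add] at this
      rw [symm y x] at this
      simp at this
      linarith
    refine (Matrix.nondegenerate_of_det_ne_zero hd).1 x (fun y => ?_)
    convert hx' y <;> rfl
  obtain ⟨w, hw⟩ := QuadraticForm.equivalent_weightedSumSquares_units_of_nondegenerate' (QA A) hs
  exact ⟨_, w, hw⟩

lemma core_step {n : ℕ} (A : Matrix (Fin n) (Fin n) ℤ) (hA : Aᵀ = A) (hdet : IsUnit A.det)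
    {m : ℕ} (w : Fin m → ℚˣ) (hw : (QA A).Equivalent (wss w)) {p : ℕ} (hp : p.Prime)
    (hc : clsw w ∈ SG gq (p + 1)) : clsw w ∈ SG gq p := by
  have hP := Nat.prime_iff_prime_int.mp hp
  obtain ⟨l, e, han, hne, hmem⟩ := wittLike_gq.step hp hc
  obtain ⟨k, d, hd, hsum⟩ := SG_repr wittLike_gq hmem
  have hp0 : (p : ℚ) ≠ 0 := by exact_mod_cast hp.ne_zero
  have hd0 : ∀ j, ((-d j : ℤ) : ℚ) ≠ 0 := fun j => by exact_mod_cast (hd j).neg.1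
  have he0 : ∀ j, ((-(p * e j) : ℤ) : ℚ) ≠ 0 := fun j => by
    have : -((p : ℤ) * e j) ≠ 0 := neg_ne_zero.mpr (mul_ne_zero hP.ne_zero (hne j))
    exact_mod_cast this
  let v : Fin k ⊕ Fin l → ℚˣ :=
    Sum.elim (fun j => Units.mk0 _ (hd0 j)) (fun j => Units.mk0 _ (he0 j))
  have hv : clsw w + clsw v = 0 := by
    have : clsw v = -(∑ j, gq (d j)) - ∑ j, gq (p * e j) := by
      simp only [clsw, v, Fintype.sum_sum_type, Sum.elim_inl, Sum.elim_inr]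
      simp only [← gq_of_ne, gq_neg]
      rw [sub_eq_add_neg]
      congr 1
      · exact Finset.sum_neg_distrib (fun j => gq (d j))
      · exact Finset.sum_neg_distrib (fun j => gq (p * e j))
    rw [this, ← hsum]
    abel
  have hmet := met_of_clsw w v hv
  have hmet2 : Met (QuadraticMap.prod (QA A) (wss v)) :=
    hmet.equiv (equiv_prod hw.symm (QuadraticMap.Equivalent.refl _))
  obtain ⟨X, hX, hdim⟩ := hmet2
  let K : Matrix (Fin n ⊕ Fin k) (Fin n ⊕ Fin k) ℤ :=
    Matrix.fromBlocks A 0 0 (Matrix.diagonal fun j => -d j)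
  let F : ((Fin n → ℚ) × ((Fin k ⊕ Fin l) → ℚ)) ≃ₗ[ℚ] ((Fin n ⊕ Fin k → ℚ) × (Fin l → ℚ)) :=
    { toFun := fun x => (Sum.elim x.1 (fun j => x.2 (Sum.inl j)), fun j => x.2 (Sum.inr j))
      invFun := fun y => (fun i => y.1 (Sum.inl i), Sum.elim (fun j => y.1 (Sum.inr j)) y.2)
      map_add' := by
        intro x y
        ext i
        · rcases i with i | i <;> simp
        · simp
      map_smul' := by
        intro c x
        ext i
        · rcases i with i | i <;> simp
        · simp
      left_inv := by
        intro x
        ext i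
        · simp
        · rcases i with i | i <;> simp
      right_inv := by
        intro x
        ext i
        · rcases i with i | i <;> simp
        · simp }
  have hl : Fintype.card (Fin l) = 0 := by
    refine plem hp K ?_ ?_ (fun j => -e j) ?_ (X.map (F : _ →ₗ[ℚ] _)) ?_ ?_
    · simp [K, Matrix.fromBlocks_transpose, hA]
    · simp only [K, Matrix.det_fromBlocks_zero₂₁, Matrix.det_diagonal]
      intro h
      rcases hP.dvd_or_dvd h with h | h
      · exact hP.not_isUnit (isUnit_of_dvd_unit h hdet)
      · obtain ⟨j, _, hj⟩ := (hP.dvd_finsetProd_iff _).mp h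
        exact lt_irrefl _ ((hd j).neg.2 p hp hj)
    · intro x hx
      apply han x
      simpa [Finset.sum_neg_distrib] using hx
    · rintro _ ⟨x, hx, rfl⟩
      have := hX x hx
      rw [QuadraticMap.prod_apply, QA_apply, wss_apply] at this
      rw [← this]
      simp [F, K, v, dotProduct, mulVec, Fintype.sum_sum_type, Matrix.diagonal_apply, Finset.mul_sum,
        Matrix.fromBlocks, Finset.sum_neg_distrib]
      simp only [← Finset.sum_neg_distrib, add_assoc]
      congr 1
      congr 1
      · refine Finset.sum_congr rfl fun i _ => ?_
        ring
      · refine Finset.sum_congr rfl fun i _ => ?_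
        ring
    · rw [LinearEquiv.finrank_map_eq]
      simpa [add_assoc] using hdim
  have hl' : l = 0 := by simpa using hl
  subst hl'
  simpa using hmem

lemma core_descend {n : ℕ} (A : Matrix (Fin n) (Fin n) ℤ) (hA : Aᵀ = A) (hdet : IsUnit A.det)
    {m : ℕ} (w : Fin m → ℚˣ) (hw : (QA A).Equivalent (wss w)) (k : ℕ) :
    clsw w ∈ SG gq (k + 2) → clsw w ∈ SG gq 2 := by
  induction k with
  | zero => exact id
  | succ k ih =>
    intro h
    apply ih
    by_cases hp : (k + 2).Prime
    · exact core_step A hA hdet w hw hp (by convert h using 2)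
    · refine AddSubgroup.closure_mono ?_ h
      rintro _ ⟨a, ha, rfl⟩
      refine ⟨a, ⟨ha.1, fun q hq hd => ?_⟩, rfl⟩
      have h1 := ha.2 q hq hd
      have h2 : q ≠ k + 2 := by rintro rfl; exact hp hq
      omega

lemma core_class {n : ℕ} (A : Matrix (Fin n) (Fin n) ℤ) (hA : Aᵀ = A) (hdet : IsUnit A.det)
    {m : ℕ} (w : Fin m → ℚˣ) (hw : (QA A).Equivalent (wss w)) :
    ∃ k : ℤ, clsw w = k • gq 1 := by
  choose z hz0 hz using fun i => cls_eq_gq (w i)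
  have h1 : clsw w ∈ SG gq ((∑ i, (z i).natAbs + 1) + 2) := by
    unfold clsw
    refine sum_mem fun i _ => ?_
    rw [hz]
    apply mem_SG
    refine ⟨hz0 i, fun q hq hd => ?_⟩
    have h2 : q ≤ (z i).natAbs := by
      apply Nat.le_of_dvd (Int.natAbs_pos.mpr (hz0 i))
      exact Int.natCast_dvd.mp hd
    have h3 : (z i).natAbs ≤ ∑ i, (z i).natAbs :=
      Finset.single_le_sum (f := fun i => (z i).natAbs) (fun _ _ => Nat.zero_le _)
        (Finset.mem_univ i)
    omega
  have h2 := core_descend A hA hdet w hw _ h1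
  have h3 : SG gq 2 ≤ AddSubgroup.zmultiples (gq 1) := by
    unfold SG
    rw [AddSubgroup.closure_le]
    rintro _ ⟨a, ha, rfl⟩
    have : a.natAbs = 1 := by
      by_contra hne
      obtain ⟨q, hq, hqd⟩ := Nat.exists_prime_and_dvd hne
      have := ha.2 q hq (Int.natCast_dvd.mpr hqd)
      have := hq.two_le
      omega
    rcases Int.natAbs_eq a with h | h <;> rw [this] at h <;> rw [h]
    · exact AddSubgroup.mem_zmultiples _
    · rw [gq_neg]
      exact neg_mem (AddSubgroup.mem_zmultiples _)
  obtain ⟨k, hk⟩ := AddSubgroup.mem_zmultiples_iff.mp (h3 h2)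
  exact ⟨k, hk.symm⟩

lemma isotropic_of_met {n K : ℕ} (A : Matrix (Fin n) (Fin n) ℤ) (η : ℚˣ)
    (hmet : Met (QuadraticMap.prod (QA A) (wss (fun _ : Fin K => η))))
    (v : Fin n → ℚ) (hv : 0 < (η : ℚ) * QA A v) : ∃ x : Fin n → ℚ, x ≠ 0 ∧ QA A x = 0 := by
  obtain ⟨X, hX, hdim⟩ := hmet
  have hη : (η : ℚ) ≠ 0 := η.ne_zero
  have hv0 : v ≠ 0 := by rintro rfl; simp at hv
  have hdis : Disjoint X ((Submodule.span ℚ {v}).prod (⊤ : Submodule ℚ (Fin K → ℚ))) := by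
    rw [Submodule.disjoint_def]
    rintro ⟨x, z⟩ hx ⟨hxv, _⟩
    obtain ⟨c, rfl⟩ := Submodule.mem_span_singleton.mp hxv
    have h := hX _ hx
    rw [QuadraticMap.prod_apply, wss_apply, ← Finset.mul_sum] at h
    simp only [QuadraticMap.map_smul, smul_eq_mul] at h
    have h2 : c * c * (η * QA A v) + (η : ℚ) ^ 2 * ∑ i, z i * z i = 0 := by
      linear_combination (η : ℚ) * h
    have h3 : 0 ≤ ∑ i, z i * z i := Finset.sum_nonneg fun i _ => mul_self_nonneg _
    have h4 : 0 < (η : ℚ) ^ 2 := by positivity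
    have h5 : c * c * (η * QA A v) = 0 := by
      have := mul_nonneg (mul_self_nonneg c) hv.le
      have := mul_nonneg h4.le h3
      linarith
    have hc : c = 0 := by
      rcases mul_eq_zero.mp h5 with h | h
      · exact mul_self_eq_zero.mp h
      · exact absurd h hv.ne'
    have h6 : ∑ i, z i * z i = 0 := by
      rw [h5, zero_add] at h2
      exact (mul_eq_zero.mp h2).resolve_left h4.ne'
    rw [Finset.sum_eq_zero_iff_of_nonneg fun i _ => mul_self_nonneg _] at h6
    have hz : z = 0 := by
      ext i
      exact mul_self_eq_zero.mp (h6 i (Finset.mem_univ i))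
    simp [hc, hz]
  have e1 := Submodule.finrank_add_finrank_le_of_disjoint hdis
  have e2 := finrank_prod_sub (Submodule.span ℚ {v}) (⊤ : Submodule ℚ (Fin K → ℚ))
  rw [finrank_span_singleton hv0, finrank_top, Module.finrank_fin_fun] at e2
  let S := LinearMap.snd ℚ (Fin n → ℚ) (Fin K → ℚ)
  have e3 := finrank_le_map S X
  have e4 : finrank ℚ (X.map S) ≤ K := by
    simpa using Submodule.finrank_le (X.map S)
  have hfr : finrank ℚ ((Fin n → ℚ) × (Fin K → ℚ)) = n + K := by simp
  have e5 : finrank ℚ ↥(X ⊓ LinearMap.ker S) ≠ 0 := by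
    have ar : ∀ {N x y s k : ℕ}, N = n + K → N ≤ 2 * x → x + y ≤ N → 1 + K ≤ y →
        x ≤ s + k → s ≤ K → k ≠ 0 := by omega
    exact ar hfr hdim e1 e2 e3 e4
  have e6 : X ⊓ LinearMap.ker S ≠ ⊥ := by
    intro h
    exact e5 (by rw [h]; exact finrank_bot _ _)
  obtain ⟨y, hy, hy0⟩ := Submodule.exists_mem_ne_zero_of_ne_bot e6
  have hy2 : y.2 = 0 := hy.2
  refine ⟨y.1, ?_, ?_⟩
  · intro h
    exact hy0 (Prod.ext h hy2)
  · have := hX y hy.1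
    rw [QuadraticMap.prod_apply, hy2] at this
    simpa using this

theorem isotropic_matrix {n : ℕ} (A : Matrix (Fin n) (Fin n) ℤ) (hA : Aᵀ = A)
    (hdet : IsUnit A.det) (hpos : ∃ v, 0 < v ⬝ᵥ A *ᵥ v) (hneg : ∃ v, v ⬝ᵥ A *ᵥ v < 0) :
    ∃ x : Fin n → ℤ, x ≠ 0 ∧ x ⬝ᵥ A *ᵥ x = 0 := by
  have hcast : ∀ v : Fin n → ℤ, QA A (fun i => (v i : ℚ)) = ((v ⬝ᵥ A *ᵥ v : ℤ) : ℚ) := by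
    intro v
    rw [QA_apply]
    simp [dotProduct, mulVec]
  suffices h : ∃ x : Fin n → ℚ, x ≠ 0 ∧ QA A x = 0 by
    obtain ⟨x, hx, hq⟩ := h
    obtain ⟨D, m, hD, hm⟩ := exists_clear x
    have hm' : (fun i => (m i : ℚ)) = (D : ℚ) • x := by ext i; simp [hm]
    refine ⟨m, ?_, ?_⟩
    · rintro rfl
      apply hx
      ext i
      have := hm i
      simp [hD] at this
      simpa using this
    · have := hcast m
      rw [hm', QuadraticMap.map_smul, hq, smul_zero] at this
      exact_mod_cast this.symm
  obtain ⟨m, w, hw⟩ := QA_diag A hA hdet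
  obtain ⟨k, hk⟩ := core_class A hA hdet w hw
  have key : ∀ (K : ℕ) (η : ℚˣ), clsw w + K • cls η = 0 →
      Met (QuadraticMap.prod (QA A) (wss (fun _ : Fin K => η))) := by
    intro K η h
    have := met_of_clsw w (fun _ : Fin K => η) (by simpa [clsw] using h)
    exact this.equiv (equiv_prod hw.symm (QuadraticMap.Equivalent.refl _))
  have h1 : gq 1 = cls 1 := by
    rw [gq_of_ne (a := 1) (by norm_num)]
    congr 1
    ext
    simp
  obtain ⟨vp, hvp⟩ := hpos
  obtain ⟨vn, hvn⟩ := hneg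
  obtain ⟨K, rfl | rfl⟩ := Int.eq_nat_or_neg k
  · refine isotropic_of_met (K := K) A (-1) (key K (-1) ?_) (fun i => (vn i : ℚ)) ?_
    · rw [hk, cls_neg, h1]; simp
    · rw [hcast]; push_cast; simpa using hvn
  · refine isotropic_of_met (K := K) A 1 (key K 1 ?_) (fun i => (vp i : ℚ)) ?_
    · rw [hk, h1]; simp
    · rw [hcast]; push_cast; simpa using hvp

end OddIndef
namespace OddIndef
open Module Matrix

universe u

/-- The conclusion of the theorem for a given form. -/
def Diag (R : Type) [CommRing R] (L : Type u) [AddCommGroup L] [Module R L] (B : L →ₗ[R] L →ₗ[R] R) : Prop :=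
  ∃ (p q : ℕ) (e : L ≃ₗ[R] (Fin p → R) × (Fin q → R)),
      ∀ x y : L, B x y = (∑ i, (e x).1 i * (e y).1 i) - ∑ j, (e x).2 j * (e y).2 j

section split
variable {R : Type} [CommRing R] {L : Type u} [AddCommGroup L] [Module R L]

lemma diag_of_subsingleton [Subsingleton L] (B : L →ₗ[R] L →ₗ[R] R) : Diag R L B := by
  refine ⟨0, 0, ⟨0, 0, fun x => Subsingleton.elim _ _, fun x => Subsingleton.elim _ _⟩, ?_⟩
  intro x y
  rw [Subsingleton.elim x 0]
  simp

/-- the restriction of `B` to the orthogonal complement of `e` -/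
def orth (B : L →ₗ[R] L →ₗ[R] R) (e : L) :
    LinearMap.ker (B e) →ₗ[R] LinearMap.ker (B e) →ₗ[R] R :=
  B.domRestrict₁₂ _ _

@[simp] lemma orth_apply (B : L →ₗ[R] L →ₗ[R] R) (e : L) (x y : LinearMap.ker (B e)) :
    orth B e x y = B x y := rfl

/-- the projection to the orthogonal complement -/
def oproj (B : L →ₗ[R] L →ₗ[R] R) (e : L) (s : R) (hs : s * s = 1) (he : B e e = s) :
    L →ₗ[R] LinearMap.ker (B e) :=
  LinearMap.codRestrict _ (LinearMap.id - (s • B e).smulRight e) (fun x => by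
    simp only [LinearMap.mem_ker, LinearMap.sub_apply, LinearMap.id_apply,
      LinearMap.smulRight_apply, map_sub, map_smul, he, LinearMap.smul_apply, smul_eq_mul]
    linear_combination (- B e x) * hs)

lemma oproj_coe (B : L →ₗ[R] L →ₗ[R] R) (e : L) (s : R) (hs : s * s = 1) (he : B e e = s) (x : L) :
    (oproj B e s hs he x : L) = x - (s * B e x) • e := rfl

/-- the splitting -/
def osplit (B : L →ₗ[R] L →ₗ[R] R) (e : L) (s : R) (hs : s * s = 1) (he : B e e = s) :
    L ≃ₗ[R] R × LinearMap.ker (B e) :=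
  LinearEquiv.ofLinearMap ((s • B e).prod (oproj B e s hs he))
    (LinearMap.coprod (LinearMap.toSpanSingleton R L e) (Submodule.subtype _))
    (by
      refine LinearMap.ext fun x => ?_
      have hx : B e x.2 = 0 := x.2.2
      refine Prod.ext ?_ (Subtype.ext ?_)
      · simp [he, hx]
        linear_combination x.1 * hs
      · simp [oproj_coe, he, hx]
        rw [hs, one_smul, sub_self, smul_zero])
    (by
      refine LinearMap.ext fun x => ?_
      simp [oproj_coe])

lemma osplit_apply (B : L →ₗ[R] L →ₗ[R] R) (e : L) (s : R) (hs : s * s = 1) (he : B e e = s)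
    (x : L) : osplit B e s hs he x = (s * B e x, oproj B e s hs he x) := rfl

lemma B_split (B : L →ₗ[R] L →ₗ[R] R) (hsymm : ∀ x y, B x y = B y x)
    (e : L) (s : R) (hs : s * s = 1) (he : B e e = s) (x y : L) :
    B x y = s * ((s * B e x) * (s * B e y)) +
      orth B e (oproj B e s hs he x) (oproj B e s hs he y) := by
  rw [orth_apply, oproj_coe, oproj_coe]
  simp only [map_sub, map_smul, LinearMap.sub_apply, LinearMap.smul_apply, smul_eq_mul, he,
    hsymm x e]
  linear_combination (-2 * s * (B e x) * (B e y)) * hs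

lemma orth_bij (B : L →ₗ[R] L →ₗ[R] R) (hsymm : ∀ x y, B x y = B y x)
    (hB : Function.Bijective B)
    (e : L) (s : R) (hs : s * s = 1) (he : B e e = s) : Function.Bijective (orth B e) := by
  constructor
  · rw [injective_iff_map_eq_zero]
    intro x hx
    have h0 : B (x : L) = 0 := by
      refine LinearMap.ext fun y => ?_
      have h1 : orth B e x (oproj B e s hs he y) = 0 := by rw [hx]; rfl
      have h2 : B e x = 0 := x.2
      rw [orth_apply, oproj_coe, map_sub, map_smul, hsymm x e, h2] at h1
      simpa using h1
    exact Subtype.ext ((injective_iff_map_eq_zero B).mp hB.1 _ h0)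
  · intro f
    obtain ⟨z, hz⟩ := hB.2 (f ∘ₗ oproj B e s hs he)
    refine ⟨oproj B e s hs he z, LinearMap.ext fun m => ?_⟩
    have hm : B e m = 0 := m.2
    have h1 : oproj B e s hs he (m : L) = m := by
      apply Subtype.ext
      rw [oproj_coe, hm]; simp
    have h2 := LinearMap.congr_fun hz (m : L)
    rw [LinearMap.comp_apply, h1] at h2
    rw [orth_apply, oproj_coe, map_sub, map_smul, LinearMap.sub_apply, LinearMap.smul_apply, hm, h2]
    simp

lemma orth_finrank [IsDomain R] [IsPrincipalIdealRing R] [Module.Free R L] [Module.Finite R L] (B : L →ₗ[R] L →ₗ[R] R)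
    (e : L) (s : R) (hs : s * s = 1) (he : B e e = s) :
    finrank R (LinearMap.ker (B e)) < finrank R L := by
  rw [(osplit B e s hs he).finrank_eq, Module.finrank_prod, Module.finrank_self]
  omega

lemma prodAssoc_symm_ap {M N P : Type} [AddCommGroup M] [Module R M] [AddCommGroup N] [Module R N]
    [AddCommGroup P] [Module R P] (a : M) (b : N × P) :
    (LinearEquiv.prodAssoc R M N P).symm (a, b) = ((a, b.1), b.2) := rfl

lemma diag_of_orth (B : L →ₗ[R] L →ₗ[R] R) (hsymm : ∀ x y, B x y = B y x)
    (e : L) (he : B e e = 1 ∨ B e e = -1) (h : Diag R _ (orth B e)) : Diag R L B := by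
  obtain ⟨p, q, f, hf⟩ := h
  rcases he with he | he
  · refine ⟨p + 1, q, (osplit B e 1 (by norm_num) he).trans
      (((LinearEquiv.refl R R).prodCongr f).trans
      ((LinearEquiv.prodAssoc R R (Fin p → R) (Fin q → R)).symm.trans
      ((Fin.consLinearEquiv R (fun _ : Fin (p + 1) => R)).prodCongr (LinearEquiv.refl R _)))), ?_⟩
    intro x y
    rw [B_split B hsymm e 1 (by norm_num) he x y, hf]
    simp [osplit_apply, Fin.sum_univ_succ, prodAssoc_symm_ap]
    ring
  · refine ⟨p, q + 1, (osplit B e (-1) (by norm_num) he).trans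
      (((LinearEquiv.refl R R).prodCongr f).trans
      ((LinearEquiv.prodAssoc R R (Fin p → R) (Fin q → R)).symm.trans
      (((LinearEquiv.prodComm R R (Fin p → R)).prodCongr (LinearEquiv.refl R _)).trans
      ((LinearEquiv.prodAssoc R (Fin p → R) R (Fin q → R)).trans
      ((LinearEquiv.refl R _).prodCongr
        (Fin.consLinearEquiv R (fun _ : Fin (q + 1) => R))))))), ?_⟩
    intro x y
    rw [B_split B hsymm e (-1) (by norm_num) he x y, hf]
    simp [osplit_apply, Fin.sum_univ_succ, prodAssoc_symm_ap]
    ring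

lemma exists_prim [IsDomain R] [IsPrincipalIdealRing R] (B : L →ₗ[R] L →ₗ[R] R) (hB : Function.Bijective B)
    (h : ∃ x, x ≠ 0 ∧ B x x = 0) : ∃ x y, B x x = 0 ∧ B x y = 1 := by
  obtain ⟨x, hx, hxx⟩ := h
  obtain ⟨d, hd⟩ := (IsPrincipalIdealRing.principal (LinearMap.range (B x))).principal
  have hdv : ∀ y, ∃ c, B x y = d * c := by
    intro y
    have : B x y ∈ LinearMap.range (B x) := ⟨y, rfl⟩
    rw [hd] at this
    obtain ⟨c, hc⟩ := Submodule.mem_span_singleton.mp this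
    exact ⟨c, by rw [← hc, smul_eq_mul, mul_comm]⟩
  have hd0 : d ≠ 0 := by
    rintro rfl
    apply hx
    apply (injective_iff_map_eq_zero B).mp hB.1
    refine LinearMap.ext fun y => ?_
    obtain ⟨c, hc⟩ := hdv y
    simpa using hc
  choose φ hφ using hdv
  let F : L →ₗ[R] R :=
    { toFun := φ
      map_add' := fun a b => by
        apply mul_left_cancel₀ hd0
        rw [mul_add, ← hφ, ← hφ, ← hφ, map_add]
      map_smul' := fun a b => by
        apply mul_left_cancel₀ hd0
        rw [← hφ, map_smul, hφ]
        simp only [smul_eq_mul, RingHom.id_apply]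
        ring }
  obtain ⟨z, hz⟩ := hB.2 F
  have hxz : x = d • z := by
    apply hB.1
    refine LinearMap.ext fun y => ?_
    rw [map_smul, hz, LinearMap.smul_apply, hφ]
    rfl
  have hdm : d ∈ LinearMap.range (B x) := by rw [hd]; exact Submodule.mem_span_singleton_self d
  obtain ⟨y, hy⟩ := hdm
  refine ⟨z, y, ?_, ?_⟩
  · rw [hxz] at hxx
    simpa [hd0] using hxx
  · rw [hxz, map_smul, LinearMap.smul_apply, smul_eq_mul] at hy
    exact mul_left_cancel₀ hd0 (by rw [hy, mul_one])

lemma exists_pair (hR : ∀ a : R, Even a ∨ Odd a) (B : L →ₗ[R] L →ₗ[R] R) (hsymm : ∀ x y, B x y = B y x)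
    (hodd : ∃ x, Odd (B x x))
    (h : ∃ x y, B x x = 0 ∧ B x y = 1) : ∃ x y, B x x = 1 ∧ B y y = -1 ∧ B x y = 0 := by
  obtain ⟨x, y, hxx, hxy⟩ := h
  have : ∃ y, B x y = 1 ∧ Odd (B y y) := by
    by_cases hy : Odd (B y y)
    · exact ⟨y, hxy, hy⟩
    obtain ⟨z, hz⟩ := hodd
    have hy := (hR (B y y)).resolve_right hy
    refine ⟨z + (1 - B x z) • y, ?_, ?_⟩
    · simp [hxy]
    · have : B (z + (1 - B x z) • y) (z + (1 - B x z) • y)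
          = B z z + 2 * ((1 - B x z) * B y z) + (1 - B x z) ^ 2 * B y y := by
        simp only [map_add, map_smul, LinearMap.add_apply, LinearMap.smul_apply, smul_eq_mul,
          hsymm z y]
        ring
      rw [this]
      exact (hz.add_even (even_two_mul _)).add_even (hy.mul_left _)
  obtain ⟨y, hxy, m, hm⟩ := this
  have hyx := hsymm y x
  refine ⟨y - m • x, y - m • x - x, ?_, ?_, ?_⟩ <;>
  · simp only [map_sub, map_smul, LinearMap.sub_apply, LinearMap.smul_apply, smul_eq_mul,
      hyx, hxy, hxx, hm]
    ring

end split

lemma exists_isotropic {L : Type u} [AddCommGroup L] [Module ℤ L] [Module.Free ℤ L] [Module.Finite ℤ L] (B : L →ₗ[ℤ] L →ₗ[ℤ] ℤ)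
    (hsymm : ∀ x y, B x y = B y x) (hB : Function.Bijective B)
    (hpos : ∃ x, 0 < B x x) (hneg : ∃ x, B x x < 0) : ∃ x, x ≠ 0 ∧ B x x = 0 := by
  let b := Module.finBasis ℤ L
  let A : Matrix (Fin (finrank ℤ L)) (Fin (finrank ℤ L)) ℤ := LinearMap.toMatrix₂ b b B
  have hA0 : ∀ i j, A i j = B (b i) (b j) := fun i j => LinearMap.toMatrix₂_apply b b B i j
  have hAq : ∀ x y : L, B x y = (b.repr x : _ → ℤ) ⬝ᵥ A *ᵥ (b.repr y : _ → ℤ) := by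
    intro x y
    conv_lhs => rw [← b.sum_repr x, ← b.sum_repr y]
    simp only [map_sum, map_smul, LinearMap.sum_apply, LinearMap.smul_apply, smul_eq_mul,
      dotProduct, mulVec, hA0, Finset.mul_sum]
    rw [Finset.sum_comm]
    refine Finset.sum_congr rfl fun i _ => Finset.sum_congr rfl fun j _ => ?_
    ring
  have hA : Aᵀ = A := by
    ext i j
    rw [transpose_apply, hA0, hA0, hsymm]
  have hdet : IsUnit A.det := by
    have h1 : A = LinearMap.toMatrix b b.dualBasis (LinearEquiv.ofBijective B hB : L →ₗ[ℤ] Dual ℤ L) := by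
      ext i j
      rw [LinearMap.toMatrix_apply, hA0, hsymm]
      simp [Basis.dualBasis_repr]
    rw [h1]
    exact LinearEquiv.isUnit_det (LinearEquiv.ofBijective B hB) b b.dualBasis
  obtain ⟨x, hx, hx0⟩ := isotropic_matrix A hA hdet
    (by obtain ⟨v, hv⟩ := hpos; exact ⟨_, by rwa [hAq] at hv⟩)
    (by obtain ⟨v, hv⟩ := hneg; exact ⟨_, by rwa [hAq] at hv⟩)
  refine ⟨b.equivFun.symm x, b.equivFun.symm.map_ne_zero_iff.mpr hx, ?_⟩
  have : (b.repr (b.equivFun.symm x) : _ → ℤ) = x := b.equivFun.apply_symm_apply x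
  rw [hAq, this, hx0]



theorem main_aux {R : Type} [CommRing R] [IsDomain R] [IsPrincipalIdealRing R] [LinearOrder R]
    [IsStrictOrderedRing R] (hR : ∀ a : R, Even a ∨ Odd a)
    (H : ∀ (L : Type u) [AddCommGroup L] [Module R L] [Module.Free R L]
      [Module.Finite R L] (B : L →ₗ[R] L →ₗ[R] R) (_ : ∀ x y, B x y = B y x)
      (_ : Function.Bijective B) (_ : ∃ x, 0 < B x x) (_ : ∃ x, B x x < 0),
      ∃ x, x ≠ 0 ∧ B x x = 0) (n : ℕ) : ∀ (L : Type u) [AddCommGroup L] [Module R L] [Module.Free R L]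
    [Module.Finite R L] (B : L →ₗ[R] L →ₗ[R] R) (_ : ∀ x y : L, B x y = B y x)
    (_ : Function.Bijective B) (_ : ∃ x : L, Odd (B x x))
    (_ : ∃ x : L, 0 < B x x) (_ : ∃ x : L, B x x < 0) (_ : finrank R L = n), Diag R L B := by
  induction n using Nat.strong_induction_on with
  | _ n ih =>
  intro L _ _ _ _ B hsymm hB hodd hpos hneg hn
  obtain ⟨x, y, hx, hy, hxy⟩ := exists_pair hR B hsymm hodd
    (exists_prim B hB (H L B hsymm hB hpos hneg))
  have hyx : B y x = 0 := by rw [hsymm, hxy]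
  by_cases h1 : ∃ w, B x w = 0 ∧ 0 < B w w
  · obtain ⟨w, hw, hw'⟩ := h1
    refine diag_of_orth B hsymm x (Or.inl hx) ?_
    refine ih _ (hn ▸ orth_finrank B x 1 (by norm_num) hx) _ (orth B x)
      (fun a b => hsymm a b) (orth_bij B hsymm hB x 1 (by norm_num) hx) ?_ ?_ ?_ rfl
    · exact ⟨⟨y, hxy⟩, by simp [hy]⟩
    · exact ⟨⟨w, hw⟩, by simpa using hw'⟩
    · exact ⟨⟨y, hxy⟩, by simp [hy]⟩
  by_cases h2 : ∃ w, B y w = 0 ∧ B w w < 0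
  · obtain ⟨w, hw, hw'⟩ := h2
    refine diag_of_orth B hsymm y (Or.inr hy) ?_
    refine ih _ (hn ▸ orth_finrank B y (-1) (by norm_num) hy) _ (orth B y)
      (fun a b => hsymm a b) (orth_bij B hsymm hB y (-1) (by norm_num) hy) ?_ ?_ ?_ rfl
    · exact ⟨⟨x, hyx⟩, by simp [hx]⟩
    · exact ⟨⟨x, hyx⟩, by simp [hx]⟩
    · exact ⟨⟨w, hw⟩, by simpa using hw'⟩
  push Not at h1 h2
  refine diag_of_orth B hsymm x (Or.inl hx) ?_
  have hbx := orth_bij B hsymm hB x 1 (by norm_num) hx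
  have hsx : ∀ a b, orth B x a b = orth B x b a := fun a b => hsymm a b
  let y' : LinearMap.ker (B x) := ⟨y, hxy⟩
  have hy' : orth B x y' y' = -1 := hy
  refine diag_of_orth (orth B x) hsx y' (Or.inr hy') ?_
  have hbb := orth_bij (orth B x) hsx hbx y' (-1) (by norm_num) hy'
  have hz : ∀ w, orth (orth B x) y' w w = 0 := fun w =>
    le_antisymm (h1 w.1.1 w.1.2) (h2 w.1.1 w.2)
  have : Subsingleton (LinearMap.ker (orth B x y')) := by
    refine ⟨fun a b => ?_⟩
    have h0 : ∀ a : LinearMap.ker (orth B x y'), a = 0 := by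
      intro a
      apply (injective_iff_map_eq_zero _).mp hbb.1
      refine LinearMap.ext fun b => ?_
      have h3 := hz (a + b)
      have h4 : orth (orth B x) y' b a = orth (orth B x) y' a b := hsx _ _
      rw [map_add, map_add, LinearMap.add_apply, LinearMap.add_apply, hz a, hz b, h4] at h3
      simp only [LinearMap.zero_apply]
      linarith
    rw [h0 a, h0 b]
  exact diag_of_subsingleton _

end OddIndef


open Finset in
/-- **Milnor–Husemoller/Serre.** Every odd indefinite unimodular symmetric
bilinear form over `ℤ` is isomorphic to a diagonal form `p⟨1⟩ ⊕ q⟨−1⟩` for some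
non-negative integers `p, q`: there is a `ℤ`-linear isomorphism
`L ≃ (Fin p → ℤ) × (Fin q → ℤ)` carrying `B` to the standard diagonal form with `p`
entries `+1` and `q` entries `−1`. -/
theorem odd_indefinite_unimodular_diagonalizable
    (L : Type*) [AddCommGroup L] [Module ℤ L] [Module.Free ℤ L] [Module.Finite ℤ L]
    (B : L →ₗ[ℤ] L →ₗ[ℤ] ℤ)
    (hsymm : ∀ x y : L, B x y = B y x)
    -- unimodularity: the associated map `L → Hom(L, ℤ)` is an isomorphism
    (hunimod : Function.Bijective B)
    -- odd: `B x x` is odd for some `x`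
    (hodd : ∃ x : L, Odd (B x x))
    -- indefinite: `B x x` takes both positive and negative values
    (hindef : (∃ x : L, 0 < B x x) ∧ (∃ x : L, B x x < 0)) :
    ∃ (p q : ℕ) (e : L ≃ₗ[ℤ] (Fin p → ℤ) × (Fin q → ℤ)),
      ∀ x y : L, B x y = (∑ i, (e x).1 i * (e y).1 i) - ∑ j, (e x).2 j * (e y).2 j := by
  exact OddIndef.main_aux Int.even_or_odd
    (fun L _ _ _ _ B h1 h2 h3 h4 => OddIndef.exists_isotropic B h1 h2 h3 h4)
    _ L B hsymm hunimod hodd hindef.1 hindef.2 rfl
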